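/- arXiv:2301.09265 — 2 statements merged into one kernel-verified Lean document; each statement's English description precedes it below -/
import Mathlib

section
/- (Casolo–Tombari) Let G be a finite group such that for every prime p dividing some conjugacy class size of G one has N(G)_p = {1, p^{α(p)}} for some α(p) ≥ 1, and suppose that N(G) equals the set of all products ∏_{p ∈ S} p^{α(p)} over subsets S of the set of primes dividing elements of N(G). Then G is nilpotent. -/
/-!
Say that a prime `p` is linked to a prime `q` when some `q`-element has class size the nontrivial
power `p ^ α p`. Extremality of `N(G)` makes this relation the graph of an involution on the primes
dividing class sizes.

The involution is the identity. If distinct primes `p` and `q` are linked, choose `g` with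
`classSize g` maximal among the elements whose class size has a set of prime divisors avoiding `p`
and closed under links, and which commute with every `j`-element of coprime class size for the
primes `j` not in that set. In the centralizer of `g` only `p` and `q` matter: a commuting product
of a `p`-element and a `q`-element has class size a subproduct of `p ^ α p * q ^ α q`. An analysis
of this configuration, resting on the normal closure of a `q`-element of class size `p ^ α p`,
excludes the full product; but the full product is attained in `G` by such a commuting product,
which lies in the centralizer of `g` and has the same class size there.

Hence each `p` admits a `p`-element of class size `p ^ α p`, which lies in `O_p(G)` by Wielandt's
lemma, and this forces the `p'`-elements to centralize `O_p(G)`. For primes `q ≠ p`, a `q`-element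
`x` and an element `s` of a Sylow `p`-subgroup `S`, the commutator `⁅x, s⁆` then centralizes
`O_r(G)` for all primes `r`, so that its primary parts normalize `S`. Therefore `x * s * x⁻¹` is a
`p`-element normalizing `S`, so it lies in `S`, and `S` is normal.
-/

/-- The index of an element `x` of a group `G`: the size of its conjugacy class,
`|x^G| = |G : C_G(x)|`. -/
noncomputable def classSize {G : Type*} [Group G] (x : G) : ℕ :=
  (Subgroup.centralizer {x}).index

/-- The `p`-index of `x`: the `p`-part of `|x^G|`. -/
noncomputable def pIndex (p : ℕ) {G : Type*} [Group G] (x : G) : ℕ :=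
  p ^ ((classSize x).factorization p)

/-- `G` is `p`-index extremal (`G ∈ R(p)`): the set `N(G)_p` of `p`-indices of elements of `G`
contains exactly one nontrivial element. -/
def IsPIndexExtremal (p : ℕ) (G : Type*) [Group G] : Prop :=
  ∃! a : ℕ, a ≠ 1 ∧ ∃ x : G, pIndex p x = a

/-- `x` is a `p`-element: its order is a power of `p`. -/
def IsPElement (p : ℕ) {G : Type*} [Group G] (x : G) : Prop :=
  ∃ k : ℕ, orderOf x = p ^ k

open Subgroup

section Conjugation

variable {G : Type*} [Group G] {x x' y y' z : G}

lemma mem_centralizer_singleton_iff_commute : y ∈ centralizer {x} ↔ Commute y x :=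
  mem_centralizer_singleton_iff

lemma isConj_conj (g x : G) : IsConj x (g * x * g⁻¹) :=
  isConj_iff.2 ⟨g, rfl⟩

lemma commute_of_mem_zpowers (h : Commute x z) (hy : y ∈ zpowers x) : Commute y z := by
  obtain ⟨n, rfl⟩ := hy
  exact h.zpow_left n

lemma left_mem_zpowers_mul (h : Commute x y) (hc : (orderOf x).Coprime (orderOf y)) :
    x ∈ zpowers (x * y) := by
  obtain ⟨m, hm⟩ := exists_pow_eq_self_of_coprime hc.symm
  have hpow : (x * y) ^ orderOf y = x ^ orderOf y := by
    rw [h.mul_pow, pow_orderOf_eq_one, mul_one]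
  have hmem := pow_mem (pow_mem (mem_zpowers (x * y)) (orderOf y)) m
  rwa [hpow, hm] at hmem

lemma right_mem_zpowers_mul (h : Commute x y) (hc : (orderOf x).Coprime (orderOf y)) :
    y ∈ zpowers (x * y) := by
  rw [h.eq]
  exact left_mem_zpowers_mul h.symm hc.symm

lemma centralizer_mul_eq_inf (h : Commute x y) (hc : (orderOf x).Coprime (orderOf y)) :
    centralizer {x * y} = centralizer {x} ⊓ centralizer {y} := by
  ext z
  simp only [mem_inf, mem_centralizer_singleton_iff_commute]
  refine ⟨fun hz => ⟨?_, ?_⟩, fun hz => hz.1.mul_right hz.2⟩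
  · exact (commute_of_mem_zpowers hz.symm (left_mem_zpowers_mul h hc)).symm
  · exact (commute_of_mem_zpowers hz.symm (right_mem_zpowers_mul h hc)).symm

/-- Two elements commute up to conjugacy when the first commutes with a conjugate of the second;
this is adjacency of their conjugacy classes in the commuting graph on classes. -/
def ConjCommute (x y : G) : Prop :=
  ∃ y', IsConj y y' ∧ Commute x y'

lemma conjCommute_of_commute (h : Commute x y) : ConjCommute x y :=
  ⟨y, IsConj.refl y, h⟩

namespace ConjCommute

lemma symm (h : ConjCommute x y) : ConjCommute y x := by
  obtain ⟨_, hy, hxy⟩ := h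
  obtain ⟨g, rfl⟩ := isConj_iff.1 hy
  refine ⟨g⁻¹ * x * g⁻¹⁻¹, isConj_conj _ _, (Commute.conj_iff g).1 ?_⟩
  simpa [mul_assoc] using hxy.symm

lemma of_isConj_right (h : ConjCommute x y) (hy : IsConj y y') : ConjCommute x y' :=
  let ⟨z, hz, hxz⟩ := h
  ⟨z, hy.symm.trans hz, hxz⟩

lemma of_isConj_left (h : ConjCommute x y) (hx : IsConj x x') : ConjCommute x' y :=
  (h.symm.of_isConj_right hx).symm

end ConjCommute

end Conjugation

section ClassSize

variable {G : Type*} [Group G] {x y : G}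

lemma classSize_eq_of_isConj (h : IsConj x y) : classSize x = classSize y := by
  obtain ⟨g, rfl⟩ := isConj_iff.1 h
  have : centralizer {g * x * g⁻¹} = (centralizer {x}).map (MulAut.conj g : G →* G) := by
    ext z
    rw [map_equiv_eq_comap_symm, mem_comap, mem_centralizer_singleton_iff_commute,
      mem_centralizer_singleton_iff_commute, ← Commute.conj_iff g⁻¹]
    simp [mul_assoc]
  rw [classSize, classSize, this, index_map_equiv]

lemma classSize_eq_one_iff : classSize x = 1 ↔ ∀ y, Commute y x := by
  simp only [classSize, index_eq_one, eq_top_iff', mem_centralizer_singleton_iff_commute]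

lemma classSize_dvd_of_mem_zpowers (h : y ∈ zpowers x) : classSize y ∣ classSize x := by
  refine index_dvd_of_le fun z hz => ?_
  rw [mem_centralizer_singleton_iff_commute] at hz ⊢
  exact (commute_of_mem_zpowers hz.symm h).symm

lemma classSize_ne_zero [Finite G] (x : G) : classSize x ≠ 0 :=
  index_ne_zero_of_finite

end ClassSize

section PElement

variable {G : Type*} [Group G] {p q : ℕ} {x y : G}

lemma isPElement_one (p : ℕ) : IsPElement p (1 : G) :=
  ⟨0, by simp⟩

lemma isPElement_iff_pow_eq_one (hp : p.Prime) : IsPElement p x ↔ ∃ k, x ^ p ^ k = 1 := by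
  constructor
  · rintro ⟨k, hk⟩
    exact ⟨k, hk ▸ pow_orderOf_eq_one x⟩
  · rintro ⟨k, hk⟩
    obtain ⟨m, -, hm⟩ := (Nat.dvd_prime_pow hp).1 (orderOf_dvd_of_pow_eq_one hk)
    exact ⟨m, hm⟩

lemma isPElement_coe_iff {H : Subgroup G} {x : H} : IsPElement p (x : G) ↔ IsPElement p x := by
  rw [IsPElement, IsPElement, orderOf_coe]

lemma isPElement_of_orderOf_dvd (hp : p.Prime) {H : Type*} [Group H] {z : H}
    (hx : IsPElement p x) (h : orderOf z ∣ orderOf x) : IsPElement p z := by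
  obtain ⟨k, hk⟩ := hx
  obtain ⟨m, -, hm⟩ := (Nat.dvd_prime_pow hp).1 (hk ▸ h)
  exact ⟨m, hm⟩

lemma isPElement_of_mem_isPGroup (hp : p.Prime) {H : Subgroup G} (hH : IsPGroup p H)
    (hx : x ∈ H) : IsPElement p x := by
  obtain ⟨k, hk⟩ := hH ⟨x, hx⟩
  exact (isPElement_iff_pow_eq_one hp).2 ⟨k, by simpa [Subtype.ext_iff] using hk⟩

lemma isPGroup_of_forall_isPElement (hp : p.Prime) {H : Subgroup G}
    (h : ∀ x ∈ H, IsPElement p x) : IsPGroup p H := by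
  rintro ⟨x, hx⟩
  obtain ⟨k, hk⟩ := (isPElement_iff_pow_eq_one hp).1 (h x hx)
  exact ⟨k, by simpa [Subtype.ext_iff] using hk⟩

namespace IsPElement

lemma inv (hx : IsPElement p x) : IsPElement p x⁻¹ := by
  rwa [IsPElement, orderOf_inv]

lemma mul (hp : p.Prime) (hx : IsPElement p x) (hy : IsPElement p y) (h : Commute x y) :
    IsPElement p (x * y) := by
  rw [isPElement_iff_pow_eq_one hp] at *
  obtain ⟨k, hk⟩ := hx
  obtain ⟨l, hl⟩ := hy
  refine ⟨k + l, ?_⟩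
  rw [h.mul_pow, pow_add, pow_mul, hk, one_pow, mul_comm, pow_mul, hl, one_pow, one_mul]

lemma of_mem_zpowers (hp : p.Prime) (hx : IsPElement p x) (hy : y ∈ zpowers x) :
    IsPElement p y :=
  isPElement_of_orderOf_dvd hp hx (orderOf_dvd_of_mem_zpowers hy)

lemma of_isConj (hx : IsPElement p x) (h : IsConj x y) : IsPElement p y := by
  obtain ⟨g, rfl⟩ := isConj_iff.1 h
  rwa [IsPElement, ← MulAut.conj_apply, MulEquiv.orderOf_eq]

lemma isPGroup_zpowers (hp : p.Prime) (hx : IsPElement p x) : IsPGroup p (zpowers x) :=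
  isPGroup_of_forall_isPElement hp fun _ hy => hx.of_mem_zpowers hp hy

lemma orderOf_coprime (hp : p.Prime) (hx : IsPElement p x) {n : ℕ} (h : ¬ p ∣ n) :
    (orderOf x).Coprime n := by
  obtain ⟨k, hk⟩ := hx
  exact hk ▸ Nat.Coprime.pow_left _ ((Nat.Prime.coprime_iff_not_dvd hp).2 h)

lemma not_dvd_orderOf (hp : p.Prime) (hq : q.Prime) (hpq : p ≠ q) (hx : IsPElement p x) :
    ¬ q ∣ orderOf x := by
  obtain ⟨k, hk⟩ := hx
  exact fun h => hpq ((Nat.prime_dvd_prime_iff_eq hq hp).1 (hq.dvd_of_dvd_pow (hk ▸ h))).symm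

lemma eq_one_of_not_dvd_orderOf (hp : p.Prime) (hx : IsPElement p x) (h : ¬ p ∣ orderOf x) :
    x = 1 :=
  orderOf_eq_one_iff.1 ((Nat.coprime_self _).1 (hx.orderOf_coprime hp h))

lemma orderOf_coprime_orderOf (hp : p.Prime) (hq : q.Prime) (hpq : p ≠ q)
    (hx : IsPElement p x) (hy : IsPElement q y) : (orderOf x).Coprime (orderOf y) :=
  hx.orderOf_coprime hp (hy.not_dvd_orderOf hq hp hpq.symm)

end IsPElement

lemma exists_mul_eq_of_coprime {m n : ℕ} (hmn : m.Coprime n) {g : G} (hg : g ^ (m * n) = 1) :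
    ∃ x ∈ zpowers g, ∃ y ∈ zpowers g, x * y = g ∧ x ^ m = 1 ∧ y ^ n = 1 := by
  have hg' : g ^ ((m : ℤ) * n) = 1 := by exact_mod_cast hg
  have bezout : (n : ℤ) * m.gcdB n + m * m.gcdA n = 1 := by
    rw [add_comm, ← Nat.gcd_eq_gcd_ab, hmn.gcd_eq_one, Nat.cast_one]
  refine ⟨g ^ ((n : ℤ) * m.gcdB n), ⟨_, rfl⟩, g ^ ((m : ℤ) * m.gcdA n), ⟨_, rfl⟩, ?_, ?_, ?_⟩
  · rw [← zpow_add, bezout, zpow_one]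
  · rw [← zpow_natCast, ← zpow_mul,
      show (n : ℤ) * m.gcdB n * m = m * n * m.gcdB n by ring, zpow_mul, hg', one_zpow]
  · rw [← zpow_natCast, ← zpow_mul,
      show (m : ℤ) * m.gcdA n * n = m * n * m.gcdA n by ring, zpow_mul, hg', one_zpow]

lemma exists_isPElement_mul_eq [Finite G] (hp : p.Prime) (g : G) :
    ∃ x ∈ zpowers g, ∃ y ∈ zpowers g, x * y = g ∧ IsPElement p x ∧ ¬ p ∣ orderOf y := by
  have hcop := Nat.coprime_ordCompl hp (orderOf_pos g).ne'
  obtain ⟨x, hx, y, hy, hxy, hxp, hyp⟩ :=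
    exists_mul_eq_of_coprime (g := g) (hcop.pow_left ((orderOf g).factorization p))
      (by rw [Nat.ordProj_mul_ordCompl_eq_self, pow_orderOf_eq_one])
  refine ⟨x, hx, y, hy, hxy, (isPElement_iff_pow_eq_one hp).2 ⟨_, hxp⟩, ?_⟩
  exact fun h => (hp.coprime_iff_not_dvd.1 hcop) (h.trans (orderOf_dvd_of_pow_eq_one hyp))

end PElement

section Index

variable {G : Type*} [Group G]

lemma exists_map_conj_le {p : ℕ} (hp : p.Prime) {D P : Subgroup G} (h : ¬ p ∣ D.index)
    (hP : IsPGroup p P) : ∃ g : G, P.map (MulAut.conj g : G →* G) ≤ D := by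
  have := Fact.mk hp
  obtain ⟨a, ha⟩ := hP.nonempty_fixed_point_of_prime_not_dvd_card (G ⧸ D) h
  obtain ⟨g, rfl⟩ := QuotientGroup.mk_surjective a
  refine ⟨g⁻¹, map_le_iff_le_comap.2 fun x hx => ?_⟩
  have hxg : ((x * g : G) : G ⧸ D) = (g : G ⧸ D) := ha ⟨x, hx⟩
  rw [eq_comm, QuotientGroup.eq] at hxg
  simpa [mul_assoc] using hxg

lemma exists_isConj_mem {p : ℕ} (hp : p.Prime) {D : Subgroup G} (h : ¬ p ∣ D.index) {x : G}
    (hx : IsPElement p x) : ∃ y ∈ D, IsConj x y := by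
  obtain ⟨g, hg⟩ := exists_map_conj_le hp h (hx.isPGroup_zpowers hp)
  exact ⟨_, hg (mem_map_of_mem _ (mem_zpowers x)), isConj_conj g x⟩

variable [Finite G]

lemma exists_forall_isConj_notMem {H : Subgroup G} (hH : H ≠ ⊤) :
    ∃ x : G, ∀ y, IsConj x y → y ∉ H := by
  classical
  by_contra! hcon
  have := Fintype.ofFinite G
  have := Fintype.ofFinite (G ⧸ H)
  have hfix (g : G) : 1 ≤ Fintype.card (MulAction.fixedBy (G ⧸ H) g) := by
    obtain ⟨_, hy, hyH⟩ := hcon g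
    obtain ⟨c, rfl⟩ := isConj_iff.1 hy
    refine Fintype.card_pos_iff.2 ⟨⟨((c⁻¹ : G) : G ⧸ H), ?_⟩⟩
    exact (QuotientGroup.eq.2 (by simpa [mul_assoc] using hyH)).symm
  have hfix_one : 1 < Fintype.card (MulAction.fixedBy (G ⧸ H) (1 : G)) := by
    simp only [MulAction.fixedBy_one_eq_univ, Fintype.card_setUniv]
    rw [← Nat.card_eq_fintype_card]
    exact one_lt_index_of_ne_top hH
  have horbit : Fintype.card (Quotient (MulAction.orbitRel G (G ⧸ H))) = 1 :=
    Fintype.card_eq_one_iff_nonempty_unique.2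
      ⟨@Unique.mk' _ ⟨Quotient.mk _ (1 : G)⟩
        ((MulAction.pretransitive_iff_subsingleton_quotient G (G ⧸ H)).1 inferInstance)⟩
  have hburnside := MulAction.sum_card_fixedBy_eq_card_orbits_mul_card_group G (G ⧸ H)
  have hlt : ∑ _g : G, 1 < ∑ g : G, Fintype.card (MulAction.fixedBy (G ⧸ H) g) :=
    Finset.sum_lt_sum (fun g _ => hfix g) ⟨1, Finset.mem_univ _, hfix_one⟩
  rw [hburnside, horbit] at hlt
  simp at hlt

lemma exists_mul_eq_of_coprime_index {H K : Subgroup G} (h : H.index.Coprime K.index) (g : G) :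
    ∃ a ∈ H, ∃ b ∈ K, a * b = g := by
  have hdvd : K.index ∣ K.relIndex H := by
    refine h.symm.dvd_of_dvd_mul_right ?_
    rw [← inf_relIndex_left, relIndex_mul_index inf_le_left]
    exact index_dvd_of_le inf_le_right
  have horbit : (MulAction.orbit H ((1 : G) : G ⧸ K)).ncard = K.relIndex H := by
    rw [← MulAction.index_stabilizer]
    congr 1
    ext a
    change ((a * 1 : G) : G ⧸ K) = ((1 : G) : G ⧸ K) ↔ (a : G) ∈ K
    rw [eq_comm, QuotientGroup.eq]
    simp
  have huniv : MulAction.orbit H ((1 : G) : G ⧸ K) = Set.univ := by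
    refine Set.eq_of_subset_of_ncard_le (Set.subset_univ _) ?_
    rw [Set.ncard_univ, horbit]
    exact Nat.le_of_dvd (Nat.pos_of_ne_zero index_ne_zero_of_finite) hdvd
  obtain ⟨a, ha⟩ : (g : G ⧸ K) ∈ MulAction.orbit H ((1 : G) : G ⧸ K) := huniv ▸ Set.mem_univ _
  have ha' : ((a * 1 : G) : G ⧸ K) = (g : G ⧸ K) := ha
  rw [mul_one, QuotientGroup.eq] at ha'
  exact ⟨a, a.2, _, ha', mul_inv_cancel_left _ _⟩

lemma not_dvd_relIndex_of_factorization_index_le {q : ℕ} (hq : q.Prime) {D E : Subgroup G}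
    (hDE : D ≤ E) (h : D.index.factorization q ≤ E.index.factorization q) :
    ¬ q ∣ D.relIndex E := by
  have hmul := congrArg (Nat.factorization · q) (relIndex_mul_index hDE)
  have hD : D.relIndex E ≠ 0 := index_ne_zero_of_finite
  simp only [Nat.factorization_mul hD index_ne_zero_of_finite, Finsupp.add_apply] at hmul
  intro hdvd
  have := (hq.dvd_iff_one_le_factorization hD).1 hdvd
  lia

lemma factorization_index_le_of_forall_mem {q : ℕ} (hq : q.Prime) {D H : Subgroup G}
    (h : ∀ x ∈ H, IsPElement q x → x ∈ D) :
    D.index.factorization q ≤ H.index.factorization q := by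
  have := Fact.mk hq
  obtain ⟨S⟩ : Nonempty (Sylow q H) := inferInstance
  have hSD : (S : Subgroup H).map H.subtype ≤ D := by
    rintro _ ⟨x, hx, rfl⟩
    exact h x x.2 (isPElement_coe_iff.2 (isPElement_of_mem_isPGroup hq S.2 hx))
  have hS := (Nat.factorization_le_iff_dvd index_ne_zero_of_finite index_ne_zero_of_finite).2
    (index_dvd_of_le hSD) q
  rwa [index_map_subtype, Nat.factorization_mul index_ne_zero_of_finite index_ne_zero_of_finite,
    Finsupp.add_apply, Nat.factorization_eq_zero_of_not_dvd S.not_dvd_index, zero_add] at hS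

lemma eq_of_le_of_index_eq {H K : Subgroup G} (hle : H ≤ K) (h : H.index = K.index) : H = K := by
  have hmul := relIndex_mul_index hle
  rw [h] at hmul
  exact hle.antisymm (relIndex_eq_one.1 (Nat.eq_of_mul_eq_mul_right
    (Nat.pos_of_ne_zero index_ne_zero_of_finite) (hmul.trans (one_mul _).symm)))

lemma le_of_forall_isPElement_mem {H D : Subgroup G}
    (h : ∀ q : ℕ, q.Prime → ∀ x ∈ H, IsPElement q x → x ∈ D) : H ≤ D := by
  have hdvd : (D ⊓ H).index ∣ H.index := by
    rw [← Nat.factorization_le_iff_dvd index_ne_zero_of_finite index_ne_zero_of_finite]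
    intro q
    by_cases hq : q.Prime
    · exact factorization_index_le_of_forall_mem hq fun x hx hxq => ⟨h q hq x hx hxq, hx⟩
    · simp [hq]
  rw [← relIndex_mul_index (inf_le_right : D ⊓ H ≤ H), inf_relIndex_right] at hdvd
  exact relIndex_eq_one.1 <| Nat.dvd_one.1 <|
    Nat.dvd_of_mul_dvd_mul_right (Nat.pos_of_ne_zero index_ne_zero_of_finite) (by rwa [one_mul])

/- A Sylow `q`-subgroup of `H` lies in `D ⊓ E` and is large enough to be Sylow in `E`. -/
lemma exists_isConj_mem_of_factorization_index_le {q : ℕ} (hq : q.Prime) {H D E : Subgroup G}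
    (hHD : ∀ x ∈ H, IsPElement q x → x ∈ D) (hHE : ∀ x ∈ H, IsPElement q x → x ∈ E)
    (hle : H.index.factorization q ≤ E.index.factorization q) {x : G} (hx : IsPElement q x)
    (hxE : x ∈ E) : ∃ y ∈ D, IsConj x y := by
  have hDE : ¬ q ∣ (D ⊓ E).relIndex E :=
    not_dvd_relIndex_of_factorization_index_le hq inf_le_right <|
      (factorization_index_le_of_forall_mem hq fun x hx hxq =>
        mem_inf.2 ⟨hHD x hx hxq, hHE x hx hxq⟩).trans hle
  obtain ⟨y, hyD, hxy⟩ := exists_isConj_mem hq hDE (x := (⟨x, hxE⟩ : E))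
    (isPElement_coe_iff.1 hx)
  rw [mem_subgroupOf, mem_inf] at hyD
  exact ⟨y, hyD.1, E.subtype.map_isConj hxy⟩

end Index

section ConjCommute

variable {G : Type*} [Group G] {q : ℕ} {x y : G}

lemma conjCommute_of_not_dvd_classSize (hq : q.Prime) (hx : IsPElement q x)
    (hy : ¬ q ∣ classSize y) : ConjCommute x y := by
  obtain ⟨x', hx'y, hxx'⟩ := exists_isConj_mem hq hy hx
  exact (conjCommute_of_commute (mem_centralizer_singleton_iff_commute.1 hx'y)).of_isConj_left
    hxx'.symm

variable [Finite G]

lemma exists_mem_conj_eq_of_coprime_index {H : Subgroup G}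
    (hcop : H.index.Coprime (classSize x)) (hxy : IsConj x y) : ∃ a ∈ H, a * x * a⁻¹ = y := by
  obtain ⟨g, rfl⟩ := isConj_iff.1 hxy
  obtain ⟨a, ha, b, hb, rfl⟩ := exists_mul_eq_of_coprime_index hcop g
  have hbx : b * x * b⁻¹ = x := (mem_centralizer_singleton_iff_commute.1 hb).mul_inv_cancel
  refine ⟨a, ha, ?_⟩
  calc a * x * a⁻¹ = a * (b * x * b⁻¹) * a⁻¹ := by rw [hbx]
    _ = a * b * x * (a * b)⁻¹ := by group

lemma commute_of_conjCommute_of_coprime (hcop : (classSize x).Coprime (classSize y))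
    (h : ConjCommute x y) : Commute x y := by
  obtain ⟨_, hy, hxy⟩ := h
  obtain ⟨a, ha, rfl⟩ := exists_mem_conj_eq_of_coprime_index (H := centralizer {x}) hcop hy
  rw [mem_centralizer_singleton_iff_commute] at ha
  rwa [← Commute.conj_iff a, ha.mul_inv_cancel]

lemma conjCommute_of_factorization_le (hq : q.Prime) {d e h : G}
    (hd : ∀ f, IsPElement q f → Commute f h → Commute f d)
    (he : ∀ f, IsPElement q f → Commute f h → Commute f e)
    (hle : (classSize h).factorization q ≤ (classSize e).factorization q)
    (hx : IsPElement q x) (hxe : Commute x e) : ConjCommute x d := by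
  simp only [← mem_centralizer_singleton_iff_commute] at hd he hxe
  obtain ⟨x', hx'd, hxx'⟩ := exists_isConj_mem_of_factorization_index_le hq
    (fun f hf hfq => hd f hfq hf) (fun f hf hfq => he f hfq hf) hle hx hxe
  exact (conjCommute_of_commute (mem_centralizer_singleton_iff_commute.1 hx'd)).of_isConj_left
    hxx'.symm

lemma conjCommute_left_of_factorization_mul_le (hq : q.Prime) {z w : G} (hzw : Commute z w)
    (hcop : (orderOf z).Coprime (orderOf w))
    (hle : (classSize (z * w)).factorization q ≤ (classSize w).factorization q)
    (hx : IsPElement q x) (hxw : Commute x w) : ConjCommute x z := by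
  have hmul (f : G) (hf : Commute f (z * w)) : Commute f z ∧ Commute f w := by
    simpa only [← mem_centralizer_singleton_iff_commute, centralizer_mul_eq_inf hzw hcop,
      mem_inf] using hf
  exact conjCommute_of_factorization_le hq (fun f _ hf => (hmul f hf).1)
    (fun f _ hf => (hmul f hf).2) hle hx hxw

lemma exists_isPElement_not_conjCommute {p n : ℕ} (hp : p.Prime) (hn : n ≠ 0) {u : G}
    (hu : classSize u = p ^ n) : ∃ x : G, IsPElement p x ∧ ¬ ConjCommute x u := by
  have := Fact.mk hp
  obtain ⟨S⟩ : Nonempty (Sylow p G) := inferInstance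
  have hcop : (S : Subgroup G).index.Coprime (classSize u) :=
    hu ▸ (hp.coprime_iff_not_dvd.2 S.not_dvd_index).pow_left n |>.symm
  have hne : (centralizer {u}).subgroupOf (S : Subgroup G) ≠ ⊤ := by
    rw [Ne, subgroupOf_eq_top]
    intro hle
    exact S.not_dvd_index ((dvd_pow_self p hn).trans (hu ▸ index_dvd_of_le hle))
  obtain ⟨x, hx⟩ := exists_forall_isConj_notMem hne
  refine ⟨x, isPElement_of_mem_isPGroup hp S.2 x.2, fun ⟨u', huu', hxu'⟩ => ?_⟩
  obtain ⟨a, ha, rfl⟩ := exists_mem_conj_eq_of_coprime_index hcop huu'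
  refine hx _ (isConj_conj (⟨a, ha⟩⁻¹ : S) x) ?_
  rw [mem_subgroupOf, mem_centralizer_singleton_iff_commute, ← Commute.conj_iff a]
  simpa [mul_assoc] using hxu'

end ConjCommute

section Sylow

variable {G : Type*} [Group G] {p : ℕ} {x y : G}

lemma le_centralizer_of_not_dvd_classSize (hp : p.Prime) {T : Subgroup G} [T.Normal]
    (hT : IsPGroup p T) (hx : ¬ p ∣ classSize x) : T ≤ centralizer {x} := by
  obtain ⟨g, hg⟩ := exists_map_conj_le hp hx hT
  intro t ht
  have hmem := hg (mem_map_of_mem _ (‹T.Normal›.conj_mem t ht g⁻¹))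
  simpa [mul_assoc] using hmem

variable [Finite G]

lemma exists_sylow_mem_le (hp : p.Prime) {D : Subgroup G} (hD : ¬ p ∣ D.index) (hxD : x ∈ D)
    (hx : IsPElement p x) : ∃ S : Sylow p G, x ∈ S ∧ (S : Subgroup G) ≤ D := by
  have := Fact.mk hp
  obtain ⟨T, hT⟩ := ((isPElement_coe_iff (x := ⟨x, hxD⟩)).1 hx).isPGroup_zpowers hp
    |>.exists_le_sylow
  have hindex : ¬ p ∣ ((T : Subgroup D).map D.subtype).index := by
    rw [index_map_subtype, hp.dvd_mul, not_or]
    exact ⟨T.not_dvd_index, hD⟩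
  exact ⟨(T.2.map D.subtype).toSylow hindex, mem_map_of_mem D.subtype (hT (mem_zpowers _)),
    map_subtype_le _⟩

lemma exists_conj_mem_sylow_and_centralizer (hp : p.Prime) (S : Sylow p G)
    (hy : ¬ p ∣ classSize y) (hx : IsPElement p x) (hxy : Commute x y) :
    ∃ g : G, g * x * g⁻¹ ∈ S ∧ g * y * g⁻¹ ∈ centralizer (S : Set G) := by
  have := Fact.mk hp
  obtain ⟨T, hxT, hTy⟩ := exists_sylow_mem_le hp hy (mem_centralizer_singleton_iff_commute.2 hxy) hx
  obtain ⟨g, rfl⟩ := MulAction.exists_smul_eq G T S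
  refine ⟨g, smul_mem_pointwise_smul x (MulAut.conj g) (T : Subgroup G) hxT, ?_⟩
  rintro _ ⟨t, ht, rfl⟩
  exact (Commute.conj_iff g).2 (mem_centralizer_singleton_iff_commute.1 (hTy ht))

lemma isPElement_mem_center_of_forall_not_dvd_classSize (hp : p.Prime)
    (h : ∀ g : G, ¬ p ∣ classSize g) (hx : IsPElement p x) : x ∈ center G := by
  have := Fact.mk hp
  obtain ⟨S⟩ : Nonempty (Sylow p G) := inferInstance
  have htop : centralizer (S : Set G) = ⊤ := by
    by_contra hne
    obtain ⟨y, hy⟩ := exists_forall_isConj_notMem hne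
    obtain ⟨g, -, hg⟩ := exists_conj_mem_sylow_and_centralizer hp S (h y) (isPElement_one p)
      (Commute.one_left y)
    exact hy _ (isConj_conj g y) hg
  obtain ⟨_, hyS, hxy⟩ := exists_isConj_mem hp S.not_dvd_index hx
  obtain ⟨g, rfl⟩ := isConj_iff.1 hxy
  have hcenter := (inferInstance : (center G).Normal).conj_mem _
    (centralizer_eq_top_iff_subset.1 htop hyS) g⁻¹
  simpa [mul_assoc] using hcenter

lemma sylow_sup_centralizer_eq_top (hp : p.Prime) (S : Sylow p G)
    (h : ∀ g : G, ¬ p ∣ orderOf g → ¬ p ∣ classSize g) :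
    (S : Subgroup G) ⊔ centralizer (S : Set G) = ⊤ := by
  by_contra hne
  obtain ⟨g, hg⟩ := exists_forall_isConj_notMem hne
  obtain ⟨x, hxg, y, hyg, rfl, hx, hy⟩ := exists_isPElement_mul_eq hp g
  have hxy : Commute x y :=
    commute_of_mem_zpowers (commute_of_mem_zpowers (Commute.refl (x * y)) hyg).symm hxg
  obtain ⟨c, hcx, hcy⟩ := exists_conj_mem_sylow_and_centralizer hp S (h y hy) hx hxy
  refine hg _ (isConj_conj c (x * y)) ?_
  rw [← conj_mul]
  exact mul_mem_sup hcx hcy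

lemma commute_of_forall_not_dvd_classSize (hp : p.Prime)
    (h : ∀ g : G, ¬ p ∣ orderOf g → ¬ p ∣ classSize g) (hx : IsPElement p x)
    (hy : ¬ p ∣ orderOf y) : Commute x y := by
  have := Fact.mk hp
  obtain ⟨S⟩ : Nonempty (Sylow p G) := inferInstance
  have hS : (S : Subgroup G).Normal := by
    rw [← normalizer_eq_top_iff, eq_top_iff, ← sylow_sup_centralizer_eq_top hp S h]
    exact sup_le le_normalizer (centralizer_le_normalizer _)
  have hC : (centralizer ((S : Subgroup G) : Set G)).Normal := inferInstance
  have hxS : x ∈ S := by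
    obtain ⟨x', hx', hxx'⟩ := exists_isConj_mem hp S.not_dvd_index hx
    obtain ⟨g, rfl⟩ := isConj_iff.1 hxx'.symm
    exact hS.conj_mem _ hx' g
  have hyC : y ∈ centralizer ((S : Subgroup G) : Set G) := by
    obtain ⟨g, -, hg⟩ := exists_conj_mem_sylow_and_centralizer hp S (h y hy) (isPElement_one p)
      (Commute.one_left y)
    simpa [mul_assoc] using hC.conj_mem _ hg g⁻¹
  exact mem_centralizer_iff.1 hyC x hxS

/- Wielandt's lemma: `y` lies in `O_p(G)`. -/
lemma mem_normalCore_of_classSize_eq_pow (hp : p.Prime) {n : ℕ} (hy : IsPElement p y)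
    (hcs : classSize y = p ^ n) (S : Sylow p G) : y ∈ (S : Subgroup G).normalCore := by
  have := Fact.mk hp
  obtain ⟨z, hzS, hyz⟩ := exists_isConj_mem hp S.not_dvd_index hy
  have hcop : (S : Subgroup G).index.Coprime (classSize z) := by
    rw [← classSize_eq_of_isConj hyz, hcs]
    exact (hp.coprime_iff_not_dvd.2 S.not_dvd_index).pow_left n |>.symm
  intro c
  obtain ⟨a, ha, h⟩ :=
    exists_mem_conj_eq_of_coprime_index hcop (hyz.symm.trans (isConj_conj c y))
  rw [← h]
  exact mul_mem (mul_mem ha hzS) (inv_mem ha)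

end Sylow

section CosetCentralizer

variable {G : Type*} [Group G]

/-- For a normal subgroup `T`, conjugation on the coset `xT` by a subgroup `Y` which centralizes
that coset in `G ⧸ T`. -/
abbrev conjActionOnCoset (T : Subgroup G) [T.Normal] (x : G) (Y : Subgroup G)
    (hY : ∀ g ∈ Y, Commute (g : G ⧸ T) (x : G ⧸ T)) :
    MulAction Y {y : G // (y : G ⧸ T) = (x : G ⧸ T)} where
  smul g y := ⟨g * y * (g : G)⁻¹, by
    rw [QuotientGroup.mk_mul, QuotientGroup.mk_mul, QuotientGroup.mk_inv, y.2,
      (hY g g.2).mul_inv_cancel]⟩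
  one_smul y := Subtype.ext (show 1 * (y : G) * (1 : G)⁻¹ = y by simp)
  mul_smul a b y := Subtype.ext
    (show (a * b : G) * y * (a * b : G)⁻¹ = a * (b * y * (b : G)⁻¹) * (a : G)⁻¹ by group)

variable [Finite G] {p q b : ℕ}

lemma exists_centralizer_coset_le_centralizer (hp : p.Prime) (hq : q.Prime) (hpq : p ≠ q)
    {T : Subgroup G} [T.Normal] (hT : IsPGroup p T) (Q : Subgroup G) (hQ : IsPGroup q Q) (x : G)
    (hQx : ∀ g ∈ Q, Commute (g : G ⧸ T) (x : G ⧸ T)) :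
    ∃ t ∈ T, Q ≤ centralizer {x * t} := by
  have := Fact.mk hp
  have := Fact.mk hq
  let _ := conjActionOnCoset T x Q hQx
  have hcard : Nat.card {y : G // (y : G ⧸ T) = (x : G ⧸ T)} = Nat.card T :=
    Nat.card_congr
      { toFun y := ⟨x⁻¹ * y, QuotientGroup.eq.1 y.2.symm⟩
        invFun t := ⟨x * t, (QuotientGroup.eq.2 (by simp)).symm⟩
        left_inv y := by simp
        right_inv t := by simp }
  have hndvd : ¬ q ∣ Nat.card {y : G // (y : G ⧸ T) = (x : G ⧸ T)} := by
    obtain ⟨n, hn⟩ := IsPGroup.iff_card.1 hT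
    rw [hcard, hn]
    exact fun h => hpq ((Nat.prime_dvd_prime_iff_eq hq hp).1 (hq.dvd_of_dvd_pow h)).symm
  obtain ⟨⟨y, hy⟩, hfix⟩ := hQ.nonempty_fixed_point_of_prime_not_dvd_card _ hndvd
  refine ⟨x⁻¹ * y, QuotientGroup.eq.1 hy.symm, fun g hg => ?_⟩
  rw [mul_inv_cancel_left, mem_centralizer_singleton_iff_commute]
  exact mul_inv_eq_iff_eq_mul.1 (congrArg Subtype.val (hfix ⟨g, hg⟩))

/- Let `Y` be the preimage of the centralizer of `xT`. A Sylow `q`-subgroup of `Y` fixes an element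
of `xT`, so the index of `Y` is already `q ^ b` and `Y` is the centralizer of each element of
`xT`. -/
lemma centralizer_le_centralizer_of_coset (hp : p.Prime) (hq : q.Prime) (hpq : p ≠ q)
    {T : Subgroup G} [T.Normal] (hT : IsPGroup p T) {x : G}
    (hxT : ∀ t ∈ T, classSize (x * t) = q ^ b) {t : G} (ht : t ∈ T) :
    centralizer {x} ≤ centralizer {t} := by
  have := Fact.mk hq
  set Y : Subgroup G := (centralizer {(x : G ⧸ T)}).comap (QuotientGroup.mk' T)
  have hle (t : G) (ht : t ∈ T) : centralizer {x * t} ≤ Y := by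
    intro g hg
    have hmk : ((x * t : G) : G ⧸ T) = x := (QuotientGroup.eq.2 (by simpa using ht)).symm
    rw [mem_centralizer_singleton_iff_commute] at hg
    rw [mem_comap, mem_centralizer_singleton_iff_commute, ← hmk]
    exact hg.map (QuotientGroup.mk' T)
  obtain ⟨Q⟩ : Nonempty (Sylow q Y) := inferInstance
  obtain ⟨s, hs, hQs⟩ := exists_centralizer_coset_le_centralizer hp hq hpq hT
    ((Q : Subgroup Y).map Y.subtype) (Q.2.map Y.subtype) x fun g hg =>
      mem_centralizer_singleton_iff_commute.1 (mem_comap.1 (map_subtype_le _ hg : g ∈ Y))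
  have hrel : (centralizer {x * s}).relIndex Y = 1 := by
    have hdvd : (centralizer {x * s}).relIndex Y ∣ (Q : Subgroup Y).index :=
      index_dvd_of_le (map_le_iff_le_comap.1 hQs)
    refine Nat.eq_one_of_dvd_coprimes ?_ (relIndex_dvd_index_of_le (hle s hs)) hdvd
    rw [show (centralizer {x * s}).index = q ^ b from hxT s hs]
    exact (hq.coprime_iff_not_dvd.2 Q.not_dvd_index).pow_left b
  have hY : Y.index = q ^ b := by
    rw [← hxT s hs, classSize, ← relIndex_mul_index (hle s hs), hrel, one_mul]
  have heq (t : G) (ht : t ∈ T) : centralizer {x * t} = Y :=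
    eq_of_le_of_index_eq (hle t ht) ((hxT t ht).trans hY.symm)
  intro g hg
  have hgY : g ∈ Y := by
    have := hle 1 (one_mem T)
    rw [mul_one] at this
    exact this hg
  rw [← heq t ht, mem_centralizer_singleton_iff_commute] at hgY
  rw [mem_centralizer_singleton_iff_commute] at hg ⊢
  simpa using hg.inv_right.mul_right hgY

/- The elements of the coset `xT` of a `p`-element `x` which does not commute with a conjugate of
`u` have class size `q ^ b`. -/
lemma classSize_eq_one_of_mem_normal (hp : p.Prime) (hq : q.Prime) (hpq : p ≠ q)
    (hsize : ∀ x : G, IsPElement p x → classSize x = 1 ∨ classSize x = q ^ b)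
    {u : G} {a : ℕ} (ha : a ≠ 0) (hu : classSize u = p ^ a) {T : Subgroup G} [T.Normal]
    (hT : IsPGroup p T) (hTu : T ≤ centralizer {u}) {t : G} (ht : t ∈ T) : classSize t = 1 := by
  obtain ⟨x, hx, hxu⟩ := exists_isPElement_not_conjCommute hp ha hu
  have hTp (t : G) (ht : t ∈ T) : IsPElement p t := isPElement_of_mem_isPGroup hp hT ht
  have hTu' (t : G) (ht : t ∈ T) : Commute t u := mem_centralizer_singleton_iff_commute.1 (hTu ht)
  have hx_size : classSize x = q ^ b := (hsize x hx).resolve_left fun h =>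
    hxu (conjCommute_of_commute (classSize_eq_one_iff.1 h u).symm)
  have hpx : ¬ p ∣ classSize x := by
    rw [hx_size]
    exact fun h => hpq ((Nat.prime_dvd_prime_iff_eq hp hq).1 (hp.dvd_of_dvd_pow h))
  have hTx (t : G) (ht : t ∈ T) : Commute t x :=
    mem_centralizer_singleton_iff_commute.1 (le_centralizer_of_not_dvd_classSize hp hT hpx ht)
  have hcoset (t : G) (ht : t ∈ T) : classSize (x * t) = q ^ b := by
    refine (hsize _ (hx.mul hp (hTp t ht) (hTx t ht).symm)).resolve_left fun h => hxu ?_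
    have := (classSize_eq_one_iff.1 h u).symm.mul_left (hTu' t ht).inv_left
    exact conjCommute_of_commute (by rwa [mul_inv_cancel_right] at this)
  have hle := centralizer_le_centralizer_of_coset hp hq hpq hT hcoset ht
  by_contra ht_size
  have heq : centralizer {x} = centralizer {t} := eq_of_le_of_index_eq hle
    (hx_size.trans ((hsize t (hTp t ht)).resolve_left ht_size).symm)
  have hmem : u ∈ centralizer {x} :=
    heq ▸ mem_centralizer_singleton_iff_commute.2 (hTu' t ht).symm
  exact hxu (conjCommute_of_commute (mem_centralizer_singleton_iff_commute.1 hmem).symm)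

end CosetCentralizer

section NormalClosure

variable {G : Type*} [Group G] {p q a b : ℕ} {u t x c : G}

lemma normalClosure_singleton_le_centralizer (h : ∀ u', IsConj u u' → Commute x u') :
    normalClosure {u} ≤ centralizer {x} := by
  refine (closure_le _).2 fun u' hu' => ?_
  obtain ⟨_, rfl, huu'⟩ := Group.mem_conjugatesOfSet_iff.1 hu'
  exact mem_centralizer_singleton_iff_commute.2 (h u' huu').symm

lemma mem_centralizer_normalClosure_iff :
    x ∈ centralizer (normalClosure {u} : Set G) ↔ ∀ u', IsConj u u' → Commute x u' := by
  refine ⟨fun h u' hu' => ?_, fun h m hm => ?_⟩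
  · exact (mem_centralizer_iff.1 h u'
      (conjugatesOfSet_subset_normalClosure (Group.mem_conjugatesOfSet_iff.2 ⟨u, rfl, hu'⟩))).symm
  · exact mem_centralizer_singleton_iff_commute.1 (normalClosure_singleton_le_centralizer h hm)

lemma coprime_classSize_of_eq_pow (hp : p.Prime) (hq : q.Prime) (hpq : p ≠ q)
    (hx : classSize x = 1 ∨ classSize x = q ^ b) (hu : classSize u = p ^ a) :
    (classSize x).Coprime (classSize u) := by
  rcases hx with hx | hx <;> rw [hx, hu]
  · exact Nat.coprime_one_left _
  · exact Nat.Coprime.pow b a ((Nat.coprime_primes hq hp).2 hpq.symm)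

variable [Finite G]

lemma eq_one_of_isConj_mul (h : IsConj x (x * c)) (hxc : Commute x c)
    (hcop : (orderOf x).Coprime (orderOf c)) : c = 1 := by
  obtain ⟨g, hg⟩ := isConj_iff.1 h
  have horder := hxc.orderOf_mul_eq_mul_orderOf_of_coprime hcop
  rw [← hg, ← MulAut.conj_apply, MulEquiv.orderOf_eq] at horder
  exact orderOf_eq_one_iff.1
    (Nat.eq_of_mul_eq_mul_left (orderOf_pos x) (horder.symm.trans (mul_one _).symm))

lemma relIndex_dvd_index_of_right_normal (C M : Subgroup G) [M.Normal] :
    C.relIndex M ∣ C.index := by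
  have hM := relIndex_mul_relIndex (M ⊓ C) M (M ⊔ C) inf_le_left le_sup_left
  have hC := relIndex_mul_relIndex (M ⊓ C) C (M ⊔ C) inf_le_right le_sup_right
  rw [inf_relIndex_left, relIndex_sup_left] at hM
  rw [inf_relIndex_right, ← hM, mul_comm] at hC
  rw [← Nat.eq_of_mul_eq_mul_right (Nat.pos_of_ne_zero index_ne_zero_of_finite) hC]
  exact relIndex_dvd_index_of_le le_sup_right

lemma classSize_eq_one_of_mem_normal_of_le_centralizer (hp : p.Prime) (hq : q.Prime) (hpq : p ≠ q)
    (hsize : ∀ x : G, IsPElement p x → classSize x = 1 ∨ classSize x = q ^ b)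
    (ha : a ≠ 0) (hu : classSize u = p ^ a) {A : Subgroup G} [hA : A.Normal]
    (hcomm : ∀ x ∈ A, ∀ y ∈ A, Commute x y) (hAu : A ≤ centralizer {u})
    (htA : t ∈ A) (ht : IsPElement p t) : classSize t = 1 := by
  let T : Subgroup G :=
    { carrier := {z | z ∈ A ∧ IsPElement p z}
      one_mem' := ⟨one_mem _, isPElement_one p⟩
      mul_mem' := fun hx hy => ⟨mul_mem hx.1 hy.1, hx.2.mul hp hy.2 (hcomm _ hx.1 _ hy.1)⟩
      inv_mem' := fun hx => ⟨inv_mem hx.1, hx.2.inv⟩ }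
  have : T.Normal := ⟨fun x hx g => ⟨hA.conj_mem x hx.1 g, hx.2.of_isConj (isConj_conj g x)⟩⟩
  exact classSize_eq_one_of_mem_normal hp hq hpq hsize ha hu (T := T)
    (isPGroup_of_forall_isPElement hp fun x hx => hx.2) (fun x hx => hAu hx.1) ⟨htA, ht⟩

/- `z = g t g⁻¹ t⁻¹` is a `p`-element of `M ∩ C(M)`, hence central, for `M` the normal closure of
`u`; then `g⁻¹` and `g⁻¹ z` are conjugate, which forces `z = 1`. -/
lemma commute_right_of_commute_mul (hp : p.Prime) (hq : q.Prime) (hpq : p ≠ q)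
    (hsize : ∀ x : G, IsPElement p x → classSize x = 1 ∨ classSize x = q ^ b)
    (ha : a ≠ 0) (hu : classSize u = p ^ a) (ht : IsPElement p t)
    (htM : t ∈ centralizer (normalClosure {u} : Set G)) (hxM : x ∈ normalClosure {u})
    {g : G} (hg : IsPElement q g) (hgxt : Commute g (x * t)) : Commute g t := by
  have hz_eq : g * t * g⁻¹ * t⁻¹ = (g * x * g⁻¹)⁻¹ * x := by
    have hmul := hgxt.mul_inv_cancel
    rw [← conj_mul] at hmul
    rw [mul_inv_eq_iff_eq_mul, mul_assoc (g * x * g⁻¹)⁻¹, ← hmul, inv_mul_cancel_left]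
  set z := g * t * g⁻¹ * t⁻¹ with hz
  set M := normalClosure {u}
  have hzM : z ∈ M :=
    hz_eq ▸ mul_mem (inv_mem (normalClosure_normal.conj_mem x hxM g)) hxM
  have hzC : z ∈ centralizer (M : Set G) :=
    mul_mem ((inferInstance : (centralizer (M : Set G)).Normal).conj_mem t htM g) (inv_mem htM)
  have htz : Commute t z := (mem_centralizer_iff.1 htM z hzM).symm
  have hzp : IsPElement p z := by
    refine (ht.of_isConj (isConj_conj g t)).mul hp ht.inv ?_
    rw [show g * t * g⁻¹ = z * t by simp [hz]]
    exact (htz.symm.mul_left (Commute.refl t)).inv_right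
  have hz_central : classSize z = 1 :=
    classSize_eq_one_of_mem_normal_of_le_centralizer hp hq hpq hsize ha hu
      (A := M ⊓ centralizer (M : Set G))
      (fun x hx y hy => mem_centralizer_iff.1 hy.2 x hx.1)
      (fun x hx => mem_centralizer_singleton_iff_commute.2
        (mem_centralizer_normalClosure_iff.1 hx.2 u (IsConj.refl u))) ⟨hzM, hzC⟩ hzp
  have hconj : IsConj g⁻¹ (g⁻¹ * z) := isConj_iff.2 ⟨t, by rw [hz]; group⟩
  have hz_one : z = 1 := eq_one_of_isConj_mul hconj (classSize_eq_one_iff.1 hz_central _)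
    (hg.inv.orderOf_coprime_orderOf hq hp hpq.symm hzp)
  rwa [hz, mul_inv_eq_one, mul_inv_eq_iff_eq_mul] at hz_one

lemma commute_of_mem_normalClosure (hp : p.Prime) (hq : q.Prime) (hpq : p ≠ q)
    (hsize : ∀ x : G, IsPElement p x → classSize x = 1 ∨ classSize x = q ^ b)
    (ha : a ≠ 0) (hu : classSize u = p ^ a) (huq : IsPElement q u)
    (ht : classSize t = q ^ b) (htp : IsPElement p t)
    (htM : t ∈ centralizer (normalClosure {u} : Set G)) (hxM : x ∈ normalClosure {u})
    (hx : IsPElement p x) : Commute x u := by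
  have hxt : Commute x t := mem_centralizer_iff.1 htM x hxM
  have htu : Commute t u := mem_centralizer_normalClosure_iff.1 htM u (IsConj.refl u)
  have hcomm (g : G) (hg : IsPElement q g) (hgxt : Commute g (x * t)) : Commute g t :=
    commute_right_of_commute_mul hp hq hpq hsize ha hu htp htM hxM hg hgxt
  have hle : (classSize (x * t)).factorization q ≤ (classSize t).factorization q := by
    rcases hsize _ (hx.mul hp htp hxt) with h | h
    · simp [h]
    · rw [h, ht]
  have hux : ConjCommute u x := conjCommute_of_factorization_le hq
    (fun g hg hgxt => by simpa using hgxt.mul_right (hcomm g hg hgxt).inv_right)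
    hcomm hle huq htu.symm
  exact commute_of_conjCommute_of_coprime
    (coprime_classSize_of_eq_pow hp hq hpq (hsize x hx) hu) hux.symm

lemma normalClosure_le_centralizer_of_classSize_eq_pow (hp : p.Prime) (hu : classSize u = p ^ a)
    (h : ∀ x ∈ normalClosure {u}, IsPElement p x → Commute x u) :
    normalClosure {u} ≤ centralizer {u} := by
  have hndvd : ¬ p ∣ (centralizer {u}).relIndex (normalClosure {u}) := by
    rw [← inf_relIndex_right]
    exact not_dvd_relIndex_of_factorization_index_le hp inf_le_right <|
      factorization_index_le_of_forall_mem hp fun x hx hxp =>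
        mem_inf.2 ⟨mem_centralizer_singleton_iff_commute.2 (h x hx hxp), hx⟩
  have hdvd : (centralizer {u}).relIndex (normalClosure {u}) ∣ p ^ a :=
    hu ▸ relIndex_dvd_index_of_right_normal _ _
  exact relIndex_eq_one.1
    (Nat.eq_one_of_dvd_coprimes ((hp.coprime_iff_not_dvd.2 hndvd).pow_left a) hdvd dvd_rfl)

lemma not_commute_of_classSize_eq_pow (hp : p.Prime) (hq : q.Prime) (hpq : p ≠ q)
    (ha : a ≠ 0) (hb : b ≠ 0)
    (hsizep : ∀ x : G, IsPElement p x → classSize x = 1 ∨ classSize x = q ^ b)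
    (hsizeq : ∀ x : G, IsPElement q x → classSize x = 1 ∨ classSize x = p ^ a)
    (hu : classSize u = p ^ a) (huq : IsPElement q u)
    (ht : classSize t = q ^ b) (htp : IsPElement p t) : ¬ Commute t u := by
  intro htu
  have htM : t ∈ centralizer (normalClosure {u} : Set G) :=
    mem_centralizer_normalClosure_iff.2 fun u' huu' => commute_of_conjCommute_of_coprime
      (coprime_classSize_of_eq_pow hp hq hpq (.inr ht) (classSize_eq_of_isConj huu' ▸ hu))
      ((conjCommute_of_commute htu).of_isConj_right huu')
  have hMu : normalClosure {u} ≤ centralizer {u} :=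
    normalClosure_le_centralizer_of_classSize_eq_pow hp hu fun x hxM hx =>
      commute_of_mem_normalClosure hp hq hpq hsizep ha hu huq ht htp htM hxM hx
  have huM : u ∈ normalClosure {u} := subset_normalClosure rfl
  have hM_comm : normalClosure {u} ≤ centralizer (normalClosure {u} : Set G) := by
    refine normalClosure_le_normal (Set.singleton_subset_iff.2 ?_)
    exact fun m hm => mem_centralizer_singleton_iff_commute.1 (hMu hm)
  have hu_one := classSize_eq_one_of_mem_normal_of_le_centralizer hq hp hpq.symm hsizeq hb ht
    (fun x hx y hy => mem_centralizer_iff.1 (hM_comm hy) x hx)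
    (fun m hm => mem_centralizer_singleton_iff_commute.2 (mem_centralizer_iff.1 htM m hm))
    huM huq
  exact (Nat.one_lt_pow ha hp.one_lt).ne' (hu.symm.trans hu_one)

end NormalClosure

section TwoPrimes

variable {p q r a b : ℕ}

lemma not_dvd_pow_of_ne (hp : p.Prime) (hq : q.Prime) (hpq : p ≠ q) (n : ℕ) : ¬ p ∣ q ^ n :=
  fun h => hpq ((Nat.prime_dvd_prime_iff_eq hp hq).1 (hp.dvd_of_dvd_pow h))

lemma factorization_pow_mul_pow_left (hp : p.Prime) (hq : q.Prime) (hpq : p ≠ q) (a b : ℕ) :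
    (p ^ a * q ^ b).factorization p = a := by
  rw [Nat.factorization_mul_apply_of_coprime (Nat.coprime_pow_primes a b hp hq hpq),
    Nat.factorization_pow_self hp,
    Nat.factorization_eq_zero_of_not_dvd (not_dvd_pow_of_ne hp hq hpq b), add_zero]

lemma factorization_pow_mul_pow_right (hp : p.Prime) (hq : q.Prime) (hpq : p ≠ q) (a b : ℕ) :
    (p ^ a * q ^ b).factorization q = b := by
  rw [mul_comm, factorization_pow_mul_pow_left hq hp hpq.symm]

lemma classSize_mul_of_classSize_eq_one {G : Type*} [Group G] {x : G} (hx : classSize x = 1)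
    (y : G) : classSize (x * y) = classSize y := by
  have hcentralizer : centralizer {x * y} = centralizer {y} := by
    ext z
    have hzx : Commute z x := classSize_eq_one_iff.1 hx z
    simp only [mem_centralizer_singleton_iff_commute]
    refine ⟨fun h => ?_, hzx.mul_right⟩
    simpa using hzx.inv_right.mul_right h
  rw [classSize, classSize, hcentralizer]

lemma exists_factorization_classSize_lt_mul {G : Type*} [Group G] [Finite G]
    (hp : p.Prime) (hq : q.Prime) (hr : r.Prime) (hrp : r ≠ p) (ha : a ≠ 0) {u w : G}
    (hu : IsPElement q u) (hcu : classSize u = p ^ a) (hw : IsPElement r w)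
    (hpw : ¬ p ∣ classSize w) :
    ∃ z, IsPElement p z ∧ Commute z w ∧
      (classSize w).factorization q < (classSize (z * w)).factorization q := by
  obtain ⟨x, hx, hxu⟩ := exists_isPElement_not_conjCommute hp ha hcu
  obtain ⟨z, hxz, hwz⟩ := (conjCommute_of_not_dvd_classSize hp hx hpw).symm
  obtain ⟨u', huu', hwu'⟩ := conjCommute_of_not_dvd_classSize hr hw
    (hcu ▸ not_dvd_pow_of_ne hr hp hrp a)
  have hz := hx.of_isConj hxz
  refine ⟨z, hz, hwz.symm, lt_of_not_ge fun hle => hxu ?_⟩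
  have huz : ConjCommute u' z := conjCommute_left_of_factorization_mul_le hq hwz.symm
    (hz.orderOf_coprime_orderOf hp hr hrp.symm hw) hle (hu.of_isConj huu') hwu'.symm
  exact ((huz.of_isConj_left huu'.symm).of_isConj_right hxz.symm).symm

/-- The configuration in which two primes `p` and `q` are linked to each other: products of
commuting `p`- and `q`-elements have class size a product of a subset of `{p ^ a, q ^ b}`, the
size `p ^ a` is attained at a `q`-element and `q ^ b` at a `p`-element. It is symmetric in the two
primes, and `p ^ a * q ^ b` turns out not to be attained. -/
structure IsMutuallyLinked (p q a b : ℕ) (G : Type*) [Group G] : Prop where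
  prime_left : p.Prime
  prime_right : q.Prime
  ne : p ≠ q
  exponent_left_ne_zero : a ≠ 0
  exponent_right_ne_zero : b ≠ 0
  classSize_mul : ∀ y s : G, IsPElement p y → IsPElement q s → Commute y s →
    classSize (y * s) = 1 ∨ classSize (y * s) = p ^ a ∨ classSize (y * s) = q ^ b ∨
      classSize (y * s) = p ^ a * q ^ b
  exists_classSize_eq_left : ∃ u : G, IsPElement q u ∧ classSize u = p ^ a
  exists_classSize_eq_right : ∃ v : G, IsPElement p v ∧ classSize v = q ^ b

namespace IsMutuallyLinked

variable {G : Type*} [Group G] {u v y z s : G}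

lemma symm (h : IsMutuallyLinked p q a b G) : IsMutuallyLinked q p b a G where
  prime_left := h.prime_right
  prime_right := h.prime_left
  ne := h.ne.symm
  exponent_left_ne_zero := h.exponent_right_ne_zero
  exponent_right_ne_zero := h.exponent_left_ne_zero
  classSize_mul y s hy hs hys := by
    have := h.classSize_mul s y hs hy hys.symm
    rw [hys.eq, mul_comm (q ^ b)]
    tauto
  exists_classSize_eq_left := h.exists_classSize_eq_right
  exists_classSize_eq_right := h.exists_classSize_eq_left

lemma not_dvd_left (h : IsMutuallyLinked p q a b G) : ¬ p ∣ q ^ b :=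
  not_dvd_pow_of_ne h.prime_left h.prime_right h.ne b

lemma classSize_mul_dvd (h : IsMutuallyLinked p q a b G) (hy : IsPElement p y)
    (hs : IsPElement q s) (hys : Commute y s) : classSize (y * s) ∣ p ^ a * q ^ b := by
  rcases h.classSize_mul y s hy hs hys with h | h | h | h <;> simp [h]

variable [Finite G]

lemma classSize_right (h : IsMutuallyLinked p q a b G) (hs : IsPElement q s) :
    classSize s = 1 ∨ classSize s = p ^ a ∨ classSize s = p ^ a * q ^ b := by
  have hsize := h.classSize_mul 1 s (isPElement_one p) hs (Commute.one_left s)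
  rw [one_mul] at hsize
  rcases hsize with hs1 | hsp | hsq | hspq
  · exact .inl hs1
  · exact .inr (.inl hsp)
  · obtain ⟨u, hu, hcu⟩ := h.exists_classSize_eq_left
    obtain ⟨z, hz, hzs, hlt⟩ := exists_factorization_classSize_lt_mul h.prime_left h.prime_right
      h.prime_right h.ne.symm h.exponent_left_ne_zero hu hcu hs (hsq ▸ h.not_dvd_left)
    have hle := (Nat.factorization_le_iff_dvd (classSize_ne_zero _)
      (mul_ne_zero (pow_ne_zero _ h.prime_left.ne_zero) (pow_ne_zero _ h.prime_right.ne_zero))).2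
      (h.classSize_mul_dvd hz hs hzs) q
    rw [factorization_pow_mul_pow_right h.prime_left h.prime_right h.ne] at hle
    rw [hsq, Nat.factorization_pow_self h.prime_right] at hlt
    exact absurd hle hlt.not_ge
  · exact .inr (.inr hspq)

lemma classSize_left (h : IsMutuallyLinked p q a b G) (hy : IsPElement p y) :
    classSize y = 1 ∨ classSize y = q ^ b ∨ classSize y = p ^ a * q ^ b := by
  rw [mul_comm]
  exact h.symm.classSize_right hy

lemma commute_of_classSize_eq_mul (h : IsMutuallyLinked p q a b G) (hy : IsPElement p y)
    (hcy : classSize y = p ^ a * q ^ b) (hs : IsPElement q s) (hys : Commute y s)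
    (hzy : Commute z y) : Commute z s := by
  have hcop := hy.orderOf_coprime_orderOf h.prime_left h.prime_right h.ne hs
  have hinf := centralizer_mul_eq_inf hys hcop
  have hsize : classSize (y * s) = classSize y :=
    Nat.dvd_antisymm (hcy ▸ h.classSize_mul_dvd hy hs hys)
      (classSize_dvd_of_mem_zpowers (left_mem_zpowers_mul hys hcop))
  have heq : centralizer {y * s} = centralizer {y} :=
    eq_of_le_of_index_eq (hinf ▸ inf_le_left) hsize
  have hz := hinf ▸ heq ▸ mem_centralizer_singleton_iff_commute.2 hzy
  exact mem_centralizer_singleton_iff_commute.1 hz.2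

lemma conjCommute_of_classSize_eq_mul (h : IsMutuallyLinked p q a b G) (hz : IsPElement p z)
    (hcz : classSize z = p ^ a * q ^ b) (hu : IsPElement q u) (hcv : classSize v = q ^ b)
    (huv : Commute u v) : ConjCommute z u := by
  obtain ⟨_, hv, hzv⟩ :=
    conjCommute_of_not_dvd_classSize h.prime_left hz (y := v) (hcv ▸ h.not_dvd_left)
  obtain ⟨g, rfl⟩ := isConj_iff.1 hv
  have huz : ConjCommute (g * u * g⁻¹) z := by
    refine conjCommute_of_factorization_le h.prime_right (e := g * v * g⁻¹) (h := z)
      (fun _ _ hf => hf)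
      (fun s hs hsz => (h.commute_of_classSize_eq_mul hz hcz hs hsz.symm hzv.symm).symm) ?_
      (hu.of_isConj (isConj_conj g u)) ((Commute.conj_iff g).2 huv)
    rw [← classSize_eq_of_isConj hv, hcz, hcv, Nat.factorization_pow_self h.prime_right,
      factorization_pow_mul_pow_right h.prime_left h.prime_right h.ne]
  exact (huz.of_isConj_left (isConj_conj g u).symm).symm

lemma not_commute_of_classSize_eq_mul (h : IsMutuallyLinked p q a b G) (hy : IsPElement p y)
    (hcy : classSize y = p ^ a * q ^ b) (hu : IsPElement q u) (hcu : classSize u = p ^ a) :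
    ¬ Commute y u := by
  intro hyu
  obtain ⟨z, hz, hzu⟩ := exists_isPElement_not_conjCommute h.prime_left h.exponent_left_ne_zero hcu
  have hcentral {w : G} (hcw : classSize w = q ^ b) : ∃ w', IsConj w w' ∧ Commute w' u := by
    obtain ⟨w', hww', hyw'⟩ :=
      conjCommute_of_not_dvd_classSize h.prime_left hy (y := w) (hcw ▸ h.not_dvd_left)
    exact ⟨w', hww', h.commute_of_classSize_eq_mul hy hcy hu hyu hyw'.symm⟩
  rcases h.classSize_left hz with hcz | hcz | hcz
  · exact hzu (conjCommute_of_commute (classSize_eq_one_iff.1 hcz u).symm)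
  · obtain ⟨z', hzz', hz'u⟩ := hcentral hcz
    exact hzu ((conjCommute_of_commute hz'u).of_isConj_left hzz'.symm)
  · obtain ⟨v, -, hcv⟩ := h.exists_classSize_eq_right
    obtain ⟨v', hvv', hv'u⟩ := hcentral hcv
    exact hzu (h.conjCommute_of_classSize_eq_mul hz hcz hu
      (classSize_eq_of_isConj hvv' ▸ hcv) hv'u.symm)

lemma classSize_left_of_commute (h : IsMutuallyLinked p q a b G) (hu : IsPElement q u)
    (hcu : classSize u = p ^ a) (hcv : classSize v = q ^ b) (huv : Commute u v)
    (hz : IsPElement p z) : classSize z = 1 ∨ classSize z = q ^ b := by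
  rcases h.classSize_left hz with hcz | hcz | hcz
  · exact .inl hcz
  · exact .inr hcz
  · obtain ⟨u', huu', hzu'⟩ := h.conjCommute_of_classSize_eq_mul hz hcz hu hcv huv
    exact (h.not_commute_of_classSize_eq_mul hz hcz (hu.of_isConj huu')
      (classSize_eq_of_isConj huu' ▸ hcu) hzu').elim

lemma not_commute (h : IsMutuallyLinked p q a b G) (hu : IsPElement q u)
    (hcu : classSize u = p ^ a) (hv : IsPElement p v) (hcv : classSize v = q ^ b) :
    ¬ Commute v u := fun hvu =>
  not_commute_of_classSize_eq_pow h.prime_left h.prime_right h.ne h.exponent_left_ne_zero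
    h.exponent_right_ne_zero
    (fun _ hz => h.classSize_left_of_commute hu hcu hcv hvu.symm hz)
    (fun _ hz => h.symm.classSize_left_of_commute hv hcv hcu hvu hz) hcu hu hcv hv hvu

lemma classSize_left_ne_mul (h : IsMutuallyLinked p q a b G) (hy : IsPElement p y) :
    classSize y ≠ p ^ a * q ^ b := by
  intro hcy
  obtain ⟨u, hu, hcu⟩ := h.exists_classSize_eq_left
  have hcomm (t : G) (ht : IsPElement p t) (htu : Commute t u) : Commute t y := by
    rcases h.classSize_left ht with hct | hct | hct
    · exact (classSize_eq_one_iff.1 hct y).symm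
    · exact (h.not_commute hu hcu ht hct htu).elim
    · exact (h.not_commute_of_classSize_eq_mul ht hct hu hcu htu).elim
  have hyu : ConjCommute y u := by
    refine conjCommute_of_factorization_le h.prime_left (fun _ _ hf => hf) hcomm ?_ hy
      (Commute.refl y)
    rw [hcu, hcy, Nat.factorization_pow_self h.prime_left,
      factorization_pow_mul_pow_left h.prime_left h.prime_right h.ne]
  obtain ⟨u', huu', hyu'⟩ := hyu
  exact h.not_commute_of_classSize_eq_mul hy hcy (hu.of_isConj huu')
    (classSize_eq_of_isConj huu' ▸ hcu) hyu'

lemma classSize_mul_ne_mul (h : IsMutuallyLinked p q a b G) (hy : IsPElement p y)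
    (hs : IsPElement q s) (hys : Commute y s) : classSize (y * s) ≠ p ^ a * q ^ b := by
  intro hc
  have hs_ne : classSize s ≠ p ^ a * q ^ b := mul_comm (p ^ a) (q ^ b) ▸
    h.symm.classSize_left_ne_mul hs
  rcases h.classSize_left hy with hcy | hcy | hcy
  · exact hs_ne (classSize_mul_of_classSize_eq_one hcy s ▸ hc)
  · rcases h.classSize_right hs with hcs | hcs | hcs
    · rw [hys.eq, classSize_mul_of_classSize_eq_one hcs, hcy] at hc
      exact h.not_dvd_left (hc ▸ dvd_mul_of_dvd_left (dvd_pow_self p h.exponent_left_ne_zero) _)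
    · exact h.not_commute hs hcs hy hcy hys
    · exact hs_ne hcs
  · exact h.classSize_left_ne_mul hy hcy

end IsMutuallyLinked

end TwoPrimes

section Links

variable {G : Type*} [Group G] {α : ℕ → ℕ} {p q r k k' : ℕ} {x y e e' f s : G}

/-- `s` is a `q`-element whose class size is the nontrivial power `p ^ α p` of the prime `p`; such
an element links `p` to the prime `q`. -/
structure IsLink (α : ℕ → ℕ) (p q : ℕ) (s : G) : Prop where
  prime_left : p.Prime
  prime_right : q.Prime
  isPElement : IsPElement q s
  exponent_ne_zero : α p ≠ 0
  classSize_eq : classSize s = p ^ α p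

/-- The relation between primes defined by the links of `G`; under extremality it turns out to be
the graph of an involution of the set of primes dividing class sizes. -/
def Linked (α : ℕ → ℕ) (G : Type*) [Group G] (p q : ℕ) : Prop :=
  ∃ s : G, IsLink α p q s

/-- Every prime `p` dividing a class size divides it exactly `α p` times, and the products of one or
two of the resulting prime powers `p ^ α p` are class sizes. This weakens the condition that all
such products are class sizes to the part of it which controls pairs of primes. -/
structure IsPairwiseExtremal (α : ℕ → ℕ) (G : Type*) [Group G] : Prop where
  factorization_eq : ∀ p : ℕ, p.Prime → ∀ x : G, p ∣ classSize x →
    (classSize x).factorization p = α p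
  exists_eq_pow : ∀ p : ℕ, p.Prime → (∃ x : G, p ∣ classSize x) → ∃ x : G, classSize x = p ^ α p
  exists_eq_mul : ∀ p q : ℕ, p.Prime → q.Prime → p ≠ q → (∃ x : G, p ∣ classSize x) →
    (∃ x : G, q ∣ classSize x) → ∃ x : G, classSize x = p ^ α p * q ^ α q

namespace IsLink

lemma of_isConj (hs : IsLink α p q s) (h : IsConj s x) : IsLink α p q x where
  prime_left := hs.prime_left
  prime_right := hs.prime_right
  isPElement := hs.isPElement.of_isConj h
  exponent_ne_zero := hs.exponent_ne_zero
  classSize_eq := classSize_eq_of_isConj h ▸ hs.classSize_eq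

lemma dvd_iff (hs : IsLink α p q s) (hr : r.Prime) : r ∣ classSize s ↔ r = p := by
  rw [hs.classSize_eq, hr.prime.dvd_pow_iff_dvd hs.exponent_ne_zero,
    Nat.prime_dvd_prime_iff_eq hr hs.prime_left]

lemma dvd (hs : IsLink α p q s) : p ∣ classSize s :=
  (hs.dvd_iff hs.prime_left).2 rfl

lemma coprime_classSize (hs : IsLink α p q s) {n : ℕ} (h : ¬ p ∣ n) :
    n.Coprime (classSize s) := by
  rw [hs.classSize_eq]
  exact ((hs.prime_left.coprime_iff_not_dvd.2 h).pow_left _).symm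

lemma coprime_classSize_of_ne (hs : IsLink α p q s) (he : IsLink α k k' e) (hpk : p ≠ k) :
    (classSize s).Coprime (classSize e) :=
  he.coprime_classSize ((hs.dvd_iff he.prime_left).not.2 hpk.symm)

lemma conjCommute (hs : IsLink α p q s) (hr : r.Prime) (hrp : r ≠ p) (hf : IsPElement r f) :
    ConjCommute f s :=
  conjCommute_of_not_dvd_classSize hr hf ((hs.dvd_iff hr).not.2 hrp)

variable [Finite G]

lemma commute (hs : IsLink α p q s) (hr : r.Prime) (hrp : r ≠ p) (hf : IsPElement r f)
    (hpf : ¬ p ∣ classSize f) : Commute f s :=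
  commute_of_conjCommute_of_coprime (hs.coprime_classSize hpf) (hs.conjCommute hr hrp hf)

lemma exists_right_dvd (hs : IsLink α p q s) : ∃ x : G, q ∣ classSize x := by
  obtain ⟨x, -, hxs⟩ :=
    exists_isPElement_not_conjCommute hs.prime_left hs.exponent_ne_zero hs.classSize_eq
  exact ⟨x, not_imp_comm.1
    (fun hq => (conjCommute_of_not_dvd_classSize hs.prime_right hs.isPElement hq).symm) hxs⟩

end IsLink

namespace IsPairwiseExtremal

lemma exponent_ne_zero [Finite G] (h : IsPairwiseExtremal α G) (hp : p.Prime)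
    (hx : p ∣ classSize x) : α p ≠ 0 :=
  h.factorization_eq p hp x hx ▸
    (hp.factorization_pos_of_dvd (classSize_ne_zero x) hx).ne'

lemma factorization_eq_of_dvd (h : IsPairwiseExtremal α G) (hp : p.Prime)
    (hx : p ∣ classSize x) (hxy : classSize x ∣ classSize y) :
    (classSize y).factorization p = (classSize x).factorization p := by
  rw [h.factorization_eq p hp x hx, h.factorization_eq p hp y (hx.trans hxy)]

variable [Finite G]

lemma exists_linked (h : IsPairwiseExtremal α G) (hp : p.Prime) (hx : p ∣ classSize x) :
    ∃ q, Linked α G p q := by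
  have hα : α p ≠ 0 := h.exponent_ne_zero hp hx
  obtain ⟨y, hy⟩ := h.exists_eq_pow p hp ⟨x, hx⟩
  have hy_center : ¬ zpowers y ≤ center G := by
    intro hle
    have hy_one := classSize_eq_one_iff.2 (mem_center_iff.1 (zpowers_le.1 hle))
    exact (Nat.one_lt_pow hα hp.one_lt).ne' (hy.symm.trans hy_one)
  obtain ⟨q, hq, s, hsy, hsq, hs⟩ :
      ∃ q, q.Prime ∧ ∃ s ∈ zpowers y, IsPElement q s ∧ s ∉ center G := by
    by_contra! hcon
    exact hy_center (le_of_forall_isPElement_mem hcon)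
  obtain ⟨n, -, hn⟩ := (Nat.dvd_prime_pow hp).1 (hy ▸ classSize_dvd_of_mem_zpowers hsy)
  have hn_ne : n ≠ 0 := by
    rintro rfl
    exact hs (mem_center_iff.2 (classSize_eq_one_iff.1 (hn.trans (pow_zero p))))
  refine ⟨q, s, hp, hq, hsq, hα, ?_⟩
  rw [hn, ← h.factorization_eq p hp s (hn ▸ dvd_pow_self p hn_ne), hn,
    Nat.factorization_pow_self hp]

lemma eq_left_of_isLink (h : IsPairwiseExtremal α G) (he : IsLink α p q e) (hpq : p ≠ q)
    (hf : IsLink α q r f) : r = p := by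
  by_contra hrp
  obtain ⟨z, hz, hzf, hlt⟩ := exists_factorization_classSize_lt_mul he.prime_left hf.prime_left
    hf.prime_right hrp he.exponent_ne_zero he.isPElement he.classSize_eq hf.isPElement
    ((hf.dvd_iff he.prime_left).not.2 hpq)
  have hcop := hz.orderOf_coprime_orderOf he.prime_left hf.prime_right (Ne.symm hrp) hf.isPElement
  exact hlt.ne' (h.factorization_eq_of_dvd hf.prime_left hf.dvd
    (classSize_dvd_of_mem_zpowers (right_mem_zpowers_mul hzf hcop)))

lemma linked_symm (h : IsPairwiseExtremal α G) (hpq : Linked α G p q) : Linked α G q p := by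
  rcases eq_or_ne p q with rfl | hne
  · exact hpq
  · obtain ⟨e, he⟩ := hpq
    obtain ⟨x, hx⟩ := he.exists_right_dvd
    obtain ⟨r, f, hf⟩ := h.exists_linked he.prime_right hx
    obtain rfl := h.eq_left_of_isLink he hne hf
    exact ⟨f, hf⟩

lemma linked_right_unique (h : IsPairwiseExtremal α G) (hpq : Linked α G p q)
    (hpr : Linked α G p r) : q = r := by
  rcases eq_or_ne p q with rfl | hne
  · obtain ⟨e, he⟩ := hpq
    obtain ⟨f, hf⟩ := h.linked_symm hpr
    by_contra hne
    exact hne (h.eq_left_of_isLink hf (Ne.symm hne) he)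
  · obtain ⟨e, he⟩ := h.linked_symm hpq
    obtain ⟨f, hf⟩ := hpr
    exact (h.eq_left_of_isLink he hne.symm hf).symm

lemma linked_left_unique (h : IsPairwiseExtremal α G) (hpr : Linked α G p r)
    (hqr : Linked α G q r) : p = q :=
  h.linked_right_unique (h.linked_symm hpr) (h.linked_symm hqr)

lemma not_dvd_classSize_of_commute (h : IsPairwiseExtremal α G) (he : IsLink α k k' e)
    (he' : IsLink α k' k e') (hee' : ¬ ConjCommute e' e) (hf : ¬ k' ∣ orderOf f)
    (hfe : Commute f e) (hfe' : Commute f e') : ¬ k ∣ classSize f := by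
  intro hkf
  have hcop := he.isPElement.orderOf_coprime he.prime_right hf
  refine hee' (conjCommute_left_of_factorization_mul_le he.prime_left hfe.symm hcop
    (h.factorization_eq_of_dvd he.prime_left hkf ?_).le he'.isPElement hfe'.symm)
  exact classSize_dvd_of_mem_zpowers (right_mem_zpowers_mul hfe.symm hcop)

lemma not_dvd_classSize_of_isPElement (h : IsPairwiseExtremal α G) (he : IsLink α k k' e)
    (he' : IsLink α k' k e') (hee' : ¬ ConjCommute e' e) (hr : r.Prime) (hrk : r ≠ k)
    (hrk' : r ≠ k') (hf : IsPElement r f) : ¬ k ∣ classSize f := by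
  obtain ⟨d, hed, hfd⟩ := he.conjCommute hr hrk hf
  obtain ⟨d', hed', hfd'⟩ := he'.conjCommute hr hrk' hf
  exact h.not_dvd_classSize_of_commute (he.of_isConj hed) (he'.of_isConj hed')
    (fun hdd' => hee' ((hdd'.of_isConj_left hed'.symm).of_isConj_right hed.symm))
    (hf.not_dvd_orderOf hr he.prime_right hrk') hfd hfd'

lemma commute_of_isPElement (h : IsPairwiseExtremal α G) (he : IsLink α k k' e)
    (he' : IsLink α k' k e') (hee' : ¬ ConjCommute e' e) (hr : r.Prime) (hrk : r ≠ k)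
    (hrk' : r ≠ k') (hf : IsPElement r f) : Commute f e :=
  he.commute hr hrk hf (h.not_dvd_classSize_of_isPElement he he' hee' hr hrk hrk' hf)

end IsPairwiseExtremal

end Links

section SubgroupClassSize

variable {G : Type*} [Group G] {x y : G}

lemma classSize_coe_subgroup {H : Subgroup G} (f : H) :
    classSize f = (centralizer {(f : G)}).relIndex H := by
  rw [classSize, relIndex]
  congr 1
  ext z
  simp only [mem_subgroupOf, mem_centralizer_singleton_iff_commute]
  exact ⟨fun h => h.map H.subtype, fun h => Subtype.ext h⟩

lemma classSize_mul_eq_mul (hxy : Commute x y) (hcop : (orderOf x).Coprime (orderOf y)) :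
    classSize (x * y) =
      classSize (⟨y, mem_centralizer_singleton_iff_commute.2 hxy.symm⟩ : centralizer {x}) *
        classSize x := by
  rw [classSize_coe_subgroup, classSize, centralizer_mul_eq_inf hxy hcop, classSize,
    ← inf_relIndex_left, relIndex_mul_index inf_le_left]

variable [Finite G]

lemma classSize_coe_subgroup_of_coprime {H : Subgroup G} (f : H)
    (hcop : H.index.Coprime (classSize (f : G))) : classSize f = classSize (f : G) := by
  rw [classSize_coe_subgroup]
  refine le_antisymm ?_ (Nat.le_of_dvd (Nat.pos_of_ne_zero index_ne_zero_of_finite)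
    (hcop.symm.dvd_of_dvd_mul_right ?_))
  · rw [classSize, ← relIndex_top_right]
    exact relIndex_le_of_le_right le_top index_ne_zero_of_finite
  · rw [← inf_relIndex_left, relIndex_mul_index inf_le_left]
    exact index_dvd_of_le inf_le_right

lemma classSize_mul_of_coprime (hxy : Commute x y) (hcop : (orderOf x).Coprime (orderOf y))
    (hsize : (classSize x).Coprime (classSize y)) :
    classSize (x * y) = classSize x * classSize y := by
  have hy : y ∈ centralizer {x} := mem_centralizer_singleton_iff_commute.2 hxy.symm
  have hsize_coe : classSize (⟨y, hy⟩ : centralizer {x}) = classSize y :=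
    classSize_coe_subgroup_of_coprime ⟨y, hy⟩ hsize
  rw [classSize_mul_eq_mul hxy hcop, hsize_coe, mul_comm]

end SubgroupClassSize

section Absorbing

variable {G : Type*} [Group G] {α : ℕ → ℕ} {p q k k' : ℕ} {g m e e' y s : G}

/-- The primes dividing `classSize g` do not include `p`, are closed under links and include the
primes dividing the order of `g`; moreover `g` commutes with every `j`-element of class size coprime
to its own, for `j` a prime not dividing `classSize g`. The centralizer of such an element with
`classSize g` maximal isolates `p` and the prime linked to it from all other primes. -/
structure IsAbsorbing (α : ℕ → ℕ) (p : ℕ) (g : G) : Prop where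
  not_dvd : ¬ p ∣ classSize g
  dvd_of_dvd_orderOf : ∀ r : ℕ, r.Prime → r ∣ orderOf g → r ∣ classSize g
  dvd_of_linked : ∀ r j : ℕ, Linked α G r j → r ∣ classSize g → j ∣ classSize g
  commute : ∀ (j : ℕ) (f : G), j.Prime → ¬ j ∣ classSize g → IsPElement j f →
    (classSize f).Coprime (classSize g) → Commute f g

lemma isAbsorbing_one (hp : p.Prime) : IsAbsorbing α p (1 : G) := by
  have hone : classSize (1 : G) = 1 := classSize_eq_one_iff.2 Commute.one_right
  refine ⟨hone ▸ hp.not_dvd_one, fun r hr h => ?_, fun r j ⟨s, hs⟩ h => ?_, fun _ f _ _ _ _ =>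
    Commute.one_right f⟩
  · exact (hr.not_dvd_one (orderOf_one (G := G) ▸ h)).elim
  · exact (hs.prime_left.not_dvd_one (hone ▸ h)).elim

namespace IsAbsorbing

lemma coprime_orderOf (hg : IsAbsorbing α p g) {n : ℕ} (h : n.Coprime (classSize g)) :
    (orderOf g).Coprime n :=
  Nat.coprime_of_dvd fun r hr hrg hrn =>
    Nat.not_coprime_of_dvd_of_dvd hr.one_lt hrn (hg.dvd_of_dvd_orderOf r hr hrg) h

lemma commute_isLink (hg : IsAbsorbing α p g) (he : IsLink α k k' e)
    (hkk' : Linked α G k' k) (hk : ¬ k ∣ classSize g) : Commute e g :=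
  hg.commute k' e he.prime_right (mt (hg.dvd_of_linked k' k hkk') hk) he.isPElement
    (he.coprime_classSize hk).symm

lemma not_dvd_orderOf_mul (hg : IsAbsorbing α p g) (hk : k.Prime)
    (hkg : ¬ k ∣ classSize g) (hp : p.Prime) (hkp : k ≠ p) (hy : IsPElement p y) (hq : q.Prime)
    (hkq : k ≠ q) (hs : IsPElement q s) (hys : Commute y s) (hyg : Commute y g)
    (hsg : Commute s g) : ¬ k ∣ orderOf (g * (y * s)) := by
  intro hd
  have hd' := hd.trans ((hyg.symm.mul_right hsg.symm).orderOf_mul_dvd_mul_orderOf.trans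
    (mul_dvd_mul_left _ hys.orderOf_mul_dvd_mul_orderOf))
  rw [hk.dvd_mul, hk.dvd_mul] at hd'
  rcases hd' with hd' | hd' | hd'
  · exact hkg (hg.dvd_of_dvd_orderOf k hk hd')
  · exact hy.not_dvd_orderOf hp hk hkp.symm hd'
  · exact hs.not_dvd_orderOf hq hk hkq.symm hd'

variable [Finite G]

lemma classSize_mul (hg : IsAbsorbing α p g) (hm : IsAbsorbing α p m) (hgm : Commute g m)
    (hcop : (classSize g).Coprime (classSize m)) :
    classSize (g * m) = classSize g * classSize m :=
  classSize_mul_of_coprime hgm (hg.coprime_orderOf (hm.coprime_orderOf hcop)) hcop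

lemma mul (hg : IsAbsorbing α p g) (hm : IsAbsorbing α p m) (hgm : Commute g m)
    (hcop : (classSize g).Coprime (classSize m)) (hp : p.Prime) : IsAbsorbing α p (g * m) where
  not_dvd := by
    rw [hg.classSize_mul hm hgm hcop, hp.dvd_mul]
    exact not_or.2 ⟨hg.not_dvd, hm.not_dvd⟩
  dvd_of_dvd_orderOf r hr hd := by
    rw [hg.classSize_mul hm hgm hcop, hr.dvd_mul]
    exact (hr.dvd_mul.1 (hd.trans hgm.orderOf_mul_dvd_mul_orderOf)).imp
      (hg.dvd_of_dvd_orderOf r hr) (hm.dvd_of_dvd_orderOf r hr)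
  dvd_of_linked := by
    rintro r j ⟨e, he⟩ hr
    rw [hg.classSize_mul hm hgm hcop, he.prime_left.dvd_mul] at hr
    rw [hg.classSize_mul hm hgm hcop, he.prime_right.dvd_mul]
    exact hr.imp (hg.dvd_of_linked r j ⟨e, he⟩) (hm.dvd_of_linked r j ⟨e, he⟩)
  commute j f hj hd hf hcf := by
    rw [hg.classSize_mul hm hgm hcop, hj.dvd_mul, not_or] at hd
    rw [hg.classSize_mul hm hgm hcop, Nat.coprime_mul_iff_right] at hcf
    exact (hg.commute j f hj hd.1 hf hcf.1).mul_right (hm.commute j f hj hd.2 hf hcf.2)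

end IsAbsorbing

namespace IsPairwiseExtremal

variable [Finite G]

lemma isAbsorbing_of_prime_dvd_iff (h : IsPairwiseExtremal α G) (hp : p.Prime) (hpk : p ≠ k)
    (hpk' : p ≠ k') (hkk' : Linked α G k k')
    (hdvd : ∀ r : ℕ, r.Prime → (r ∣ classSize m ↔ r = k ∨ r = k'))
    (horder : ∀ r : ℕ, r.Prime → r ∣ orderOf m → r = k ∨ r = k')
    (hcomm : ∀ (j : ℕ) (f : G), j.Prime → j ≠ k → j ≠ k' → IsPElement j f →
      ¬ k ∣ classSize f → ¬ k' ∣ classSize f → Commute f m) : IsAbsorbing α p m where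
  not_dvd := by
    rw [hdvd p hp]
    exact not_or.2 ⟨hpk, hpk'⟩
  dvd_of_dvd_orderOf r hr hd := (hdvd r hr).2 (horder r hr hd)
  dvd_of_linked := by
    intro r j hrj hr
    have ⟨_, he⟩ := hrj
    rw [hdvd r he.prime_left] at hr
    rw [hdvd j he.prime_right]
    rcases hr with rfl | rfl
    · exact .inr (h.linked_right_unique hrj hkk')
    · exact .inl (h.linked_right_unique hrj (h.linked_symm hkk'))
  commute j f hj hd hf hcop := by
    obtain ⟨_, he⟩ := hkk'
    rw [hdvd j hj, not_or] at hd
    refine hcomm j f hj hd.1 hd.2 hf (fun hk => ?_) (fun hk' => ?_)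
    · exact Nat.not_coprime_of_dvd_of_dvd he.prime_left.one_lt hk
        ((hdvd k he.prime_left).2 (.inl rfl)) hcop
    · exact Nat.not_coprime_of_dvd_of_dvd he.prime_right.one_lt hk'
        ((hdvd k' he.prime_right).2 (.inr rfl)) hcop

lemma isAbsorbing_of_isLink_self (h : IsPairwiseExtremal α G) (hp : p.Prime) (hpk : p ≠ k)
    (he : IsLink α k k e) : IsAbsorbing α p e := by
  refine h.isAbsorbing_of_prime_dvd_iff hp hpk hpk ⟨e, he⟩ (fun r hr => ?_) (fun r hr hd => ?_)
    (fun j f hj hjk _ hf hkf _ => he.commute hj hjk hf hkf)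
  · rw [or_self, he.dvd_iff hr]
  · by_contra! hne
    exact he.isPElement.not_dvd_orderOf he.prime_left hr hne.1.symm hd

lemma isAbsorbing_mul_of_isLink (h : IsPairwiseExtremal α G) (hp : p.Prime) (hpk : p ≠ k)
    (hpk' : p ≠ k') (hne : k ≠ k') (he : IsLink α k k' e) (he' : IsLink α k' k e')
    (hee' : Commute e e') : IsAbsorbing α p (e * e') := by
  have hcop := he.isPElement.orderOf_coprime_orderOf he.prime_right he.prime_left hne.symm
    he'.isPElement
  have hsize := classSize_mul_of_coprime hee' hcop (he.coprime_classSize_of_ne he' hne)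
  refine h.isAbsorbing_of_prime_dvd_iff hp hpk hpk' ⟨e, he⟩ (fun r hr => ?_) (fun r hr hd => ?_)
    (fun j f hj hjk hjk' hf hkf hk'f =>
      (he.commute hj hjk hf hkf).mul_right (he'.commute hj hjk' hf hk'f))
  · rw [hsize, hr.dvd_mul, he.dvd_iff hr, he'.dvd_iff hr]
  · by_contra! hr_ne
    rcases hr.dvd_mul.1 (hd.trans hee'.orderOf_mul_dvd_mul_orderOf) with hd | hd
    · exact he.isPElement.not_dvd_orderOf he.prime_right hr hr_ne.2.symm hd
    · exact he'.isPElement.not_dvd_orderOf he.prime_left hr hr_ne.1.symm hd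

end IsPairwiseExtremal

end Absorbing

section MaximalAbsorbing

variable {G : Type*} [Group G] [Finite G] {α : ℕ → ℕ} {p q k k' : ℕ} {g m e e' y s : G}

lemma classSize_eq_one_of_isAbsorbing_of_maximal (hg : MaximalFor (IsAbsorbing α p) classSize g)
    (hm : IsAbsorbing α p m) (hp : p.Prime) (hgm : Commute g m)
    (hcop : (classSize g).Coprime (classSize m)) : classSize m = 1 := by
  have hpos := Nat.pos_of_ne_zero (classSize_ne_zero g)
  have hsize := hg.1.classSize_mul hm hgm hcop
  have hle := hg.2 (hg.1.mul hm hgm hcop hp)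
    (hsize ▸ Nat.le_mul_of_pos_right _ (Nat.pos_of_ne_zero (classSize_ne_zero m)))
  rw [hsize] at hle
  exact le_antisymm (Nat.le_of_mul_le_mul_left (hle.trans_eq (mul_one _).symm) hpos)
    (Nat.pos_of_ne_zero (classSize_ne_zero m))

namespace IsPairwiseExtremal

lemma ne_of_isLink_of_maximal (h : IsPairwiseExtremal α G) (hp : p.Prime)
    (hg : MaximalFor (IsAbsorbing α p) classSize g) (he : IsLink α k k' e) (hpk : p ≠ k)
    (hkg : ¬ k ∣ classSize g) : k ≠ k' := by
  rintro rfl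
  have hone := classSize_eq_one_of_isAbsorbing_of_maximal hg
    (h.isAbsorbing_of_isLink_self hp hpk he) hp (hg.1.commute_isLink he ⟨e, he⟩ hkg).symm
    (he.coprime_classSize hkg)
  exact he.prime_left.not_dvd_one (hone ▸ he.dvd)

lemma not_conjCommute_of_maximal (h : IsPairwiseExtremal α G) (hp : p.Prime)
    (hg : MaximalFor (IsAbsorbing α p) classSize g) (he : IsLink α k k' e)
    (he' : IsLink α k' k e') (hpk : p ≠ k) (hpk' : p ≠ k') (hkg : ¬ k ∣ classSize g) :
    ¬ ConjCommute e' e := by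
  intro hee'
  obtain ⟨d, he'd, hed⟩ := hee'.symm
  have hd := he'.of_isConj he'd
  have hne := h.ne_of_isLink_of_maximal hp hg he hpk hkg
  have hk'g : ¬ k' ∣ classSize g := mt (hg.1.dvd_of_linked k' k ⟨e', he'⟩) hkg
  have hsize : classSize (e * d) = classSize e * classSize d :=
    classSize_mul_of_coprime hed (he.isPElement.orderOf_coprime_orderOf he.prime_right
      he.prime_left hne.symm hd.isPElement) (he.coprime_classSize_of_ne hd hne)
  have hcomm : Commute (e * d) g :=
    (hg.1.commute_isLink he ⟨e', he'⟩ hkg).mul_left (hg.1.commute_isLink hd ⟨e, he⟩ hk'g)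
  have hone := classSize_eq_one_of_isAbsorbing_of_maximal hg
    (h.isAbsorbing_mul_of_isLink hp hpk hpk' hne he hd hed) hp hcomm.symm
    (hsize ▸ (he.coprime_classSize hkg).mul_right (hd.coprime_classSize hk'g))
  exact he.prime_left.not_dvd_one (hone ▸ hsize ▸ he.dvd.mul_right _)

lemma eq_or_eq_of_prime_dvd_of_maximal (h : IsPairwiseExtremal α G) (hpq : Linked α G p q)
    (hg : MaximalFor (IsAbsorbing α p) classSize g) (hy : IsPElement p y) (hs : IsPElement q s)
    (hys : Commute y s) (hyg : Commute y g) (hsg : Commute s g) (hk : k.Prime)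
    (hkg : ¬ k ∣ classSize g) (hd : k ∣ classSize (g * (y * s))) : k = p ∨ k = q := by
  by_contra! hk_ne
  have ⟨_, hu⟩ := hpq
  have hp := hu.prime_left
  have hq := hu.prime_right
  obtain ⟨k', e, he⟩ := h.exists_linked hk hd
  obtain ⟨e', he'⟩ := h.linked_symm ⟨e, he⟩
  have hk'g : ¬ k' ∣ classSize g := mt (hg.1.dvd_of_linked k' k ⟨e', he'⟩) hkg
  have hk'p : k' ≠ p := by
    rintro rfl
    exact hk_ne.2 (h.linked_right_unique ⟨e', he'⟩ hpq)
  have hk'q : k' ≠ q := by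
    rintro rfl
    exact hk_ne.1 (h.linked_left_unique ⟨e, he⟩ hpq)
  have hee' := h.not_conjCommute_of_maximal hp hg he he' hk_ne.1.symm hk'p.symm hkg
  have he'e : ¬ ConjCommute e e' := mt ConjCommute.symm hee'
  have hye := h.commute_of_isPElement he he' hee' hp hk_ne.1.symm hk'p.symm hy
  have hye' := h.commute_of_isPElement he' he he'e hp hk'p.symm hk_ne.1.symm hy
  have hse := h.commute_of_isPElement he he' hee' hq hk_ne.2.symm hk'q.symm hs
  have hse' := h.commute_of_isPElement he' he he'e hq hk'q.symm hk_ne.2.symm hs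
  have hge := (hg.1.commute_isLink he ⟨e', he'⟩ hkg).symm
  have hge' := (hg.1.commute_isLink he' ⟨e, he⟩ hk'g).symm
  have horder := hg.1.not_dvd_orderOf_mul he.prime_right hk'g hp hk'p hy hq hk'q hs hys hyg hsg
  exact h.not_dvd_classSize_of_commute he he' hee' horder (hge.mul_left (hye.mul_left hse))
    (hge'.mul_left (hye'.mul_left hse')) hd

end IsPairwiseExtremal

end MaximalAbsorbing

section LinkedPrimes

lemma eq_pow_mul_pow_of_forall_prime_dvd {n p q : ℕ} (hn : n ≠ 0) (hpq : p ≠ q)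
    (h : ∀ r : ℕ, r.Prime → r ∣ n → r = p ∨ r = q) :
    n = p ^ n.factorization p * q ^ n.factorization q := by
  have hsupport : n.factorization.support ⊆ {p, q} := fun r hr => by
    rw [Nat.support_factorization, Nat.mem_primeFactors] at hr
    simpa using h r hr.1 hr.2.1
  conv_lhs => rw [← Nat.prod_factorization_pow_eq_self hn]
  rw [Finsupp.prod_of_support_subset _ hsupport _ (fun _ _ => pow_zero _), Finset.prod_pair hpq]

variable {G : Type*} [Group G] [Finite G] {α : ℕ → ℕ} {p q r n : ℕ} {g u v w x : G}

namespace IsPairwiseExtremal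

lemma factorization_eq_zero_of_classSize_eq_mul (h : IsPairwiseExtremal α G)
    (hw : classSize w = n * classSize g) (hr : r.Prime) (hrg : r ∣ classSize g) :
    n.factorization r = 0 := by
  have hn : n ≠ 0 := fun hn => classSize_ne_zero w (by rw [hw, hn, zero_mul])
  have hfactorization := h.factorization_eq_of_dvd hr hrg (hw ▸ Dvd.intro_left n rfl)
  rw [hw, Nat.factorization_mul hn (classSize_ne_zero g), Finsupp.add_apply] at hfactorization
  omega

lemma factorization_eq_zero_or_of_classSize_eq_mul (h : IsPairwiseExtremal α G)
    (hw : classSize w = n * classSize g) (hr : r.Prime) (hrg : ¬ r ∣ classSize g) :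
    n.factorization r = 0 ∨ n.factorization r = α r := by
  have hn : n ≠ 0 := fun hn => classSize_ne_zero w (by rw [hw, hn, zero_mul])
  by_cases hrn : r ∣ n
  · right
    rw [← h.factorization_eq r hr w (hw ▸ hrn.mul_right _), hw,
      Nat.factorization_mul hn (classSize_ne_zero g), Finsupp.add_apply,
      Nat.factorization_eq_zero_of_not_dvd hrg, add_zero]
  · exact .inl (Nat.factorization_eq_zero_of_not_dvd hrn)

lemma classSize_centralizer_mul_of_maximal (h : IsPairwiseExtremal α G) (hpq : Linked α G p q)
    (hne : p ≠ q) (hg : MaximalFor (IsAbsorbing α p) classSize g) {y s : centralizer {g}}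
    (hy : IsPElement p y) (hs : IsPElement q s) (hys : Commute y s) :
    classSize (y * s) = 1 ∨ classSize (y * s) = p ^ α p ∨ classSize (y * s) = q ^ α q ∨
      classSize (y * s) = p ^ α p * q ^ α q := by
  have ⟨_, hu⟩ := hpq
  have hqg : ¬ q ∣ classSize g := mt (hg.1.dvd_of_linked q p (h.linked_symm hpq)) hg.1.not_dvd
  have hy' : IsPElement p (y : G) := isPElement_coe_iff.2 hy
  have hs' : IsPElement q (s : G) := isPElement_coe_iff.2 hs
  have hys' : Commute (y : G) (s : G) := hys.map (centralizer {g}).subtype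
  have hyg : Commute (y : G) g := mem_centralizer_singleton_iff_commute.1 y.2
  have hsg : Commute (s : G) g := mem_centralizer_singleton_iff_commute.1 s.2
  have horder : (orderOf g).Coprime (orderOf ((y : G) * s)) := hg.1.coprime_orderOf
    (((hy'.orderOf_coprime hu.prime_left hg.1.not_dvd).mul_left
      (hs'.orderOf_coprime hu.prime_right hqg)).coprime_dvd_left hys'.orderOf_mul_dvd_mul_orderOf)
  have hsize : classSize (g * ((y : G) * s)) = classSize (y * s) * classSize g :=
    classSize_mul_eq_mul (hyg.symm.mul_right hsg.symm) horder
  have hprime (r : ℕ) (hr : r.Prime) (hd : r ∣ classSize (y * s)) : r = p ∨ r = q :=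
    h.eq_or_eq_of_prime_dvd_of_maximal hpq hg hy' hs' hys' hyg hsg hr
      (fun hrg => (hr.factorization_pos_of_dvd (classSize_ne_zero _) hd).ne'
        (h.factorization_eq_zero_of_classSize_eq_mul hsize hr hrg))
      (hsize ▸ hd.mul_right _)
  rw [eq_pow_mul_pow_of_forall_prime_dvd (classSize_ne_zero (y * s)) hne hprime]
  rcases h.factorization_eq_zero_or_of_classSize_eq_mul hsize hu.prime_left hg.1.not_dvd with
      hp | hp <;>
    rcases h.factorization_eq_zero_or_of_classSize_eq_mul hsize hu.prime_right hqg with hq | hq <;>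
    simp [hp, hq]

lemma isMutuallyLinked_centralizer (h : IsPairwiseExtremal α G) (hpq : Linked α G p q)
    (hne : p ≠ q) (hg : MaximalFor (IsAbsorbing α p) classSize g) :
    IsMutuallyLinked p q (α p) (α q) (centralizer {g}) := by
  have ⟨u, hu⟩ := hpq
  have ⟨v, hv⟩ := h.linked_symm hpq
  have hqg : ¬ q ∣ classSize g := mt (hg.1.dvd_of_linked q p ⟨v, hv⟩) hg.1.not_dvd
  have hug := mem_centralizer_singleton_iff_commute.2
    (hg.1.commute_isLink hu ⟨v, hv⟩ hg.1.not_dvd)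
  have hvg := mem_centralizer_singleton_iff_commute.2 (hg.1.commute_isLink hv ⟨u, hu⟩ hqg)
  exact
    { prime_left := hu.prime_left
      prime_right := hu.prime_right
      ne := hne
      exponent_left_ne_zero := hu.exponent_ne_zero
      exponent_right_ne_zero := hv.exponent_ne_zero
      classSize_mul := fun _ _ hy hs hys =>
        h.classSize_centralizer_mul_of_maximal hpq hne hg hy hs hys
      exists_classSize_eq_left := ⟨⟨u, hug⟩, isPElement_coe_iff.1 hu.isPElement,
        (classSize_coe_subgroup_of_coprime ⟨u, hug⟩
          (hu.coprime_classSize hg.1.not_dvd)).trans hu.classSize_eq⟩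
      exists_classSize_eq_right := ⟨⟨v, hvg⟩, isPElement_coe_iff.1 hv.isPElement,
        (classSize_coe_subgroup_of_coprime ⟨v, hvg⟩
          (hv.coprime_classSize hqg)).trans hv.classSize_eq⟩ }

lemma classSize_eq_one_of_not_conjCommute (h : IsPairwiseExtremal α G) (hu : IsLink α p q u)
    (hv : IsLink α q p v) (huv : ¬ ConjCommute v u)
    (hx : ∀ r : ℕ, r.Prime → r ∣ classSize x → r = p ∨ r = q) (hpx : ¬ p ∣ orderOf x)
    (hqx : ¬ q ∣ orderOf x) : classSize x = 1 := by
  suffices hle : zpowers x ≤ center G from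
    classSize_eq_one_iff.2 (mem_center_iff.1 (zpowers_le.1 hle))
  refine le_of_forall_isPElement_mem fun r hr f hfx hf => mem_center_iff.2 ?_
  by_cases hrf : r ∣ orderOf f
  swap
  · simp [hf.eq_one_of_not_dvd_orderOf hr hrf]
  have hrx : r ∣ orderOf x := hrf.trans (orderOf_dvd_of_mem_zpowers hfx)
  have hrp : r ≠ p := fun hrp => hpx (hrp ▸ hrx)
  have hrq : r ≠ q := fun hrq => hqx (hrq ▸ hrx)
  refine classSize_eq_one_iff.1 (Nat.eq_one_iff_not_exists_prime_dvd.2 fun k hk hd => ?_)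
  rcases hx k hk (hd.trans (classSize_dvd_of_mem_zpowers hfx)) with rfl | rfl
  · exact h.not_dvd_classSize_of_isPElement hu hv huv hr hrp hrq hf hd
  · exact h.not_dvd_classSize_of_isPElement hv hu (mt ConjCommute.symm huv) hr hrq hrp hf hd

lemma exists_isPElement_mul_classSize_eq (h : IsPairwiseExtremal α G) (hpq : Linked α G p q)
    (hne : p ≠ q) : ∃ y s : G, IsPElement p y ∧ IsPElement q s ∧ Commute y s ∧
      classSize (y * s) = p ^ α p * q ^ α q := by
  obtain ⟨v, hv⟩ := h.linked_symm hpq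
  obtain ⟨u, hu⟩ := hpq
  have hp := hu.prime_left
  have hq := hu.prime_right
  by_cases huv : ConjCommute v u
  · obtain ⟨u', huu', hvu'⟩ := huv
    have hu' := hu.of_isConj huu'
    refine ⟨v, u', hv.isPElement, hu'.isPElement, hvu', ?_⟩
    rw [classSize_mul_of_coprime hvu' (hv.isPElement.orderOf_coprime_orderOf hp hq hne
      hu'.isPElement) (hv.coprime_classSize_of_ne hu' hne.symm), hv.classSize_eq,
      hu'.classSize_eq, mul_comm]
  · obtain ⟨x, hx⟩ := h.exists_eq_mul p q hp hq hne ⟨u, hu.dvd⟩ ⟨v, hv.dvd⟩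
    obtain ⟨y, hyx, x', hx'x, hyx', hy, hpx'⟩ := exists_isPElement_mul_eq hp x
    obtain ⟨s, hsx', z, hzx', hsz, hs, hqz⟩ := exists_isPElement_mul_eq hq x'
    have hx'y : Commute x' y := (commute_of_mem_zpowers (commute_of_mem_zpowers (.refl x) hx'x).symm
      hyx).symm
    have hz : classSize z = 1 := by
      refine h.classSize_eq_one_of_not_conjCommute hu hv huv (fun r hr hd => ?_)
        (fun hd => hpx' (hd.trans (orderOf_dvd_of_mem_zpowers hzx'))) hqz
      have hd' := hd.trans ((classSize_dvd_of_mem_zpowers hzx').trans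
        (classSize_dvd_of_mem_zpowers hx'x))
      rw [hx, hr.dvd_mul] at hd'
      exact hd'.imp
        (fun hd' => (Nat.prime_dvd_prime_iff_eq hr hp).1 (hr.dvd_of_dvd_pow hd'))
        (fun hd' => (Nat.prime_dvd_prime_iff_eq hr hq).1 (hr.dvd_of_dvd_pow hd'))
    refine ⟨y, s, hy, hs, (commute_of_mem_zpowers hx'y hsx').symm, ?_⟩
    rw [← hx, ← hyx', ← hsz, ← mul_assoc, (classSize_eq_one_iff.1 hz (y * s)).eq,
      classSize_mul_of_classSize_eq_one hz]

theorem eq_of_linked (h : IsPairwiseExtremal α G) (hpq : Linked α G p q) : p = q := by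
  by_contra hne
  have ⟨_, hu⟩ := hpq
  have hp := hu.prime_left
  have hq := hu.prime_right
  obtain ⟨g, hg⟩ : ∃ g : G, MaximalFor (IsAbsorbing α p) classSize g :=
    Set.Finite.exists_maximalFor classSize {g | IsAbsorbing α p g} (Set.toFinite _)
      ⟨1, isAbsorbing_one hp⟩
  have hqg : ¬ q ∣ classSize g := mt (hg.1.dvd_of_linked q p (h.linked_symm hpq)) hg.1.not_dvd
  obtain ⟨y, s, hy, hs, hys, hsize⟩ := h.exists_isPElement_mul_classSize_eq hpq hne
  have hcop : (classSize (y * s)).Coprime (classSize g) := hsize ▸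
    ((hp.coprime_iff_not_dvd.2 hg.1.not_dvd).pow_left _).mul_left
      ((hq.coprime_iff_not_dvd.2 hqg).pow_left _)
  have horder := hy.orderOf_coprime_orderOf hp hq hne hs
  have hyg : Commute y g := hg.1.commute p y hp hg.1.not_dvd hy
    (hcop.coprime_dvd_left (classSize_dvd_of_mem_zpowers (left_mem_zpowers_mul hys horder)))
  have hsg : Commute s g := hg.1.commute q s hq hqg hs
    (hcop.coprime_dvd_left (classSize_dvd_of_mem_zpowers (right_mem_zpowers_mul hys horder)))
  let y' : centralizer {g} := ⟨y, mem_centralizer_singleton_iff_commute.2 hyg⟩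
  let s' : centralizer {g} := ⟨s, mem_centralizer_singleton_iff_commute.2 hsg⟩
  exact (h.isMutuallyLinked_centralizer hpq hne hg).classSize_mul_ne_mul (y := y') (s := s')
    (isPElement_coe_iff.1 hy) (isPElement_coe_iff.1 hs) (Subtype.ext hys)
    ((classSize_coe_subgroup_of_coprime (y' * s') hcop.symm).trans hsize)

end IsPairwiseExtremal

end LinkedPrimes

section Nilpotency

open scoped commutatorElement

variable {G : Type*} [Group G] [Finite G] {α : ℕ → ℕ} {p q : ℕ} {f u x y s : G}

/- If `v ∈ O` normalizes `C_O(x)`, then `c = x⁻¹ * v⁻¹ * x * v` is an element of `O` commuting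
with `u`, hence with `x`; so `x * c` is a conjugate of `x`, and comparing orders gives `c = 1`. -/
lemma le_centralizer_of_forall_commute (hp : p.Prime) {O : Subgroup G} [O.Normal]
    (hO : IsPGroup p O) (hu : u ∈ O) (hxu : Commute x u) (hx : ¬ p ∣ orderOf x)
    (h : ∀ c ∈ O, Commute c u → Commute c x) : O ≤ centralizer {x} := by
  have := Fact.mk hp
  have : Group.IsNilpotent O := hO.isNilpotent
  by_contra hle
  have hlt : (centralizer {x}).subgroupOf O < ⊤ := lt_top_iff_ne_top.2 (mt subgroupOf_eq_top.1 hle)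
  obtain ⟨v, hv, hvx⟩ :=
    SetLike.exists_of_lt (Group.normalizerCondition_of_isNilpotent _ hlt)
  have hvu : Commute (v * u * v⁻¹ : G) x := mem_centralizer_singleton_iff_commute.1 <|
    (mem_normalizer_iff.1 hv ⟨u, hu⟩).1 (mem_centralizer_singleton_iff_commute.2 hxu.symm)
  set c := x⁻¹ * (v⁻¹ * x * v : G) with hc
  have hx_conj : x * c = MulAut.conj (v⁻¹ : G) x := by simp [hc]
  have hcO : c ∈ O := by
    have := O.mul_mem (Normal.conj_mem ‹O.Normal› _ (O.inv_mem v.2) x⁻¹) v.2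
    simpa [hc, mul_assoc] using this
  have hcu : Commute c u := by
    refine hxu.inv_left.mul_left (((Commute.conj_iff (v : G)).1 ?_).symm)
    simpa [mul_assoc] using hvu
  have hcx := h c hcO hcu
  have hcop := (isPElement_of_mem_isPGroup hp hO hcO).orderOf_coprime hp hx
  have horder := hcx.symm.orderOf_mul_eq_mul_orderOf_of_coprime hcop.symm
  rw [hx_conj, MulEquiv.orderOf_eq] at horder
  have hc_one : c = 1 := orderOf_eq_one_iff.1
    ((Nat.mul_eq_left (orderOf_pos x).ne').1 horder.symm)
  rw [hc_one, mul_one] at hx_conj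
  rw [MulAut.conj_apply, inv_inv, mul_assoc, eq_inv_mul_iff_mul_eq] at hx_conj
  exact hvx (mem_centralizer_singleton_iff_commute.2 hx_conj)

lemma exists_classSize_eq_pow_of_forall_commute
    (h : ∀ r : ℕ, r.Prime → r ≠ p → ∀ y : G, IsPElement r y → Commute y x) :
    ∃ n, classSize x = p ^ n := by
  refine ⟨_, Nat.eq_prime_pow_of_unique_prime_dvd (classSize_ne_zero x) fun {r} hr hd => ?_⟩
  by_contra hrp
  have hle := factorization_index_le_of_forall_mem hr (D := centralizer {x}) (H := ⊤)
    fun y _ hy => mem_centralizer_singleton_iff_commute.2 (h r hr hrp y hy)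
  rw [index_top, Nat.factorization_one] at hle
  exact (hr.factorization_pos_of_dvd (classSize_ne_zero x) hd).not_ge hle

namespace IsPairwiseExtremal

lemma commute_of_isLink_self (h : IsPairwiseExtremal α G) (hu : IsLink α p p u)
    (hxu : Commute x u) (hx : IsPElement p x) (hyu : Commute y u) (hy : ¬ p ∣ orderOf y) :
    Commute x y := by
  have hp := hu.prime_left
  have hclass (g : centralizer {u}) (hg : ¬ p ∣ orderOf g) : ¬ p ∣ classSize g := fun hd => by
    have hgu : Commute (g : G) u := mem_centralizer_singleton_iff_commute.1 g.2
    have hsize : classSize (u * g) = classSize g * classSize u := classSize_mul_eq_mul hgu.symm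
      (hu.isPElement.orderOf_coprime hp (by rwa [orderOf_coe]))
    exact (hp.factorization_pos_of_dvd (classSize_ne_zero g) hd).ne'
      (h.factorization_eq_zero_of_classSize_eq_mul hsize hp hu.dvd)
  let x' : centralizer {u} := ⟨x, mem_centralizer_singleton_iff_commute.2 hxu⟩
  let y' : centralizer {u} := ⟨y, mem_centralizer_singleton_iff_commute.2 hyu⟩
  have hxy : Commute x' y' := commute_of_forall_not_dvd_classSize hp hclass
    (isPElement_coe_iff.1 hx) (by rwa [← orderOf_coe])
  exact hxy.map (centralizer {u}).subtype

lemma exists_isLink_self (h : IsPairwiseExtremal α G) (hp : p.Prime) (hx : p ∣ classSize x) :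
    ∃ u : G, IsLink α p p u := by
  obtain ⟨q, hpq⟩ := h.exists_linked hp hx
  obtain rfl := h.eq_of_linked hpq
  exact hpq

lemma mem_centralizer_normalCore (h : IsPairwiseExtremal α G) (hp : p.Prime) (S : Sylow p G)
    (hq : q.Prime) (hqp : q ≠ p) (hx : IsPElement q x) :
    x ∈ centralizer ((S : Subgroup G).normalCore : Set G) := by
  have hcore : IsPGroup p (S : Subgroup G).normalCore := S.2.to_le (normalCore_le _)
  by_cases hdvd : ∃ g : G, p ∣ classSize g
  · obtain ⟨g, hg⟩ := hdvd
    obtain ⟨u, hu⟩ := h.exists_isLink_self hp hg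
    obtain ⟨x', hxx', hux'⟩ := (hu.conjCommute hq hqp hx).symm
    have hx' : ¬ p ∣ orderOf x' := (hx.of_isConj hxx').not_dvd_orderOf hq hp hqp
    have hle : (S : Subgroup G).normalCore ≤ centralizer {x'} :=
      le_centralizer_of_forall_commute hp hcore
        (mem_normalCore_of_classSize_eq_pow hp hu.isPElement hu.classSize_eq S) hux'.symm hx'
        fun c hc hcu => h.commute_of_isLink_self hu hcu
          (isPElement_of_mem_isPGroup hp hcore hc) hux'.symm hx'
    obtain ⟨g, rfl⟩ := isConj_iff.1 hxx'.symm
    refine Normal.conj_mem inferInstance x' (mem_centralizer_iff.2 fun c hc => ?_) g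
    exact mem_centralizer_singleton_iff_commute.1 (hle hc)
  · push Not at hdvd
    exact mem_centralizer_iff.2 fun c hc =>
      (mem_center_iff.1 (isPElement_mem_center_of_forall_not_dvd_classSize hp hdvd
        (isPElement_of_mem_isPGroup hp hcore hc)) x).symm

lemma commute_of_mem_centralizer_normalCore (h : IsPairwiseExtremal α G) (hp : p.Prime)
    {S : Sylow p G} (hf : IsPElement p f)
    (hfS : f ∈ centralizer ((S : Subgroup G).normalCore : Set G)) (hq : q.Prime) (hqp : q ≠ p)
    (hx : IsPElement q x) : Commute f x := by
  by_cases hdvd : ∃ g : G, p ∣ classSize g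
  · obtain ⟨g, hg⟩ := hdvd
    obtain ⟨u, hu⟩ := h.exists_isLink_self hp hg
    have hu_core := mem_normalCore_of_classSize_eq_pow hp hu.isPElement hu.classSize_eq S
    have hcomm {t : G} (ht : t ∈ centralizer ((S : Subgroup G).normalCore : Set G)) :
        Commute t u := (mem_centralizer_iff.1 ht u hu_core).symm
    exact h.commute_of_isLink_self hu (hcomm hfS) hf
      (hcomm (h.mem_centralizer_normalCore hp S hq hqp hx)) (hx.not_dvd_orderOf hq hp hqp)
  · push Not at hdvd
    exact (mem_center_iff.1
      (isPElement_mem_center_of_forall_not_dvd_classSize hp hdvd hf) x).symm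

lemma mem_sylow_of_mem_centralizer_normalCore (h : IsPairwiseExtremal α G) (hp : p.Prime)
    {S : Sylow p G} (hf : IsPElement p f)
    (hfS : f ∈ centralizer ((S : Subgroup G).normalCore : Set G)) : f ∈ S := by
  obtain ⟨n, hn⟩ := exists_classSize_eq_pow_of_forall_commute fun r hr hrp y hy =>
    (h.commute_of_mem_centralizer_normalCore hp hf hfS hr hrp hy).symm
  exact normalCore_le _ (mem_normalCore_of_classSize_eq_pow hp hf hn S)

lemma conj_mem_sylow (h : IsPairwiseExtremal α G) (hp : p.Prime) (S : Sylow p G) (hq : q.Prime)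
    (hqp : q ≠ p) (hx : IsPElement q x) (hs : s ∈ S) : x * s * x⁻¹ ∈ S := by
  have hsp : IsPElement p s := isPElement_of_mem_isPGroup hp S.2 hs
  have hcommutator (r : ℕ) (hr : r.Prime) (T : Sylow r G) :
      ⁅x, s⁆ ∈ centralizer ((T : Subgroup G).normalCore : Set G) := by
    rcases eq_or_ne r p with rfl | hrp
    · exact commutator_le_left _ ⊤ (commutator_mem_commutator
        (h.mem_centralizer_normalCore hp T hq hqp hx) (mem_top s))
    · exact commutator_le_right ⊤ _ (commutator_mem_commutator (mem_top x)
        (h.mem_centralizer_normalCore hr T hp hrp.symm hsp))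
  have hle : zpowers ⁅x, s⁆ ≤ normalizer (S : Set G) := by
    refine le_of_forall_isPElement_mem fun r hr f hf hfr => ?_
    rcases eq_or_ne r p with rfl | hrp
    · exact le_normalizer (h.mem_sylow_of_mem_centralizer_normalCore hp hfr
        (zpowers_le.2 (hcommutator r hr S) hf))
    · obtain ⟨T⟩ : Nonempty (Sylow r G) := inferInstance
      refine centralizer_le_normalizer _ (mem_centralizer_iff.2 fun t ht => ?_)
      exact (h.commute_of_mem_centralizer_normalCore hr hfr
        (zpowers_le.2 (hcommutator r hr T) hf) hp hrp.symm
        (isPElement_of_mem_isPGroup hp S.2 ht)).symm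
  have hmem : x * s * x⁻¹ ∈ normalizer (S : Set G) := by
    have := mul_mem (hle (mem_zpowers _)) (le_normalizer hs)
    rwa [commutatorElement_def, inv_mul_cancel_right] at this
  have hpgroup := (hsp.of_isConj (isConj_conj x s)).isPGroup_zpowers hp
  have hinf : x * s * x⁻¹ ∈ zpowers (x * s * x⁻¹) ⊓ normalizer (S : Set G) :=
    ⟨mem_zpowers _, hmem⟩
  exact (hpgroup.inf_normalizer_sylow S ▸ hinf).2

lemma sylow_normal (h : IsPairwiseExtremal α G) (hp : p.Prime) (S : Sylow p G) :
    (S : Subgroup G).Normal := by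
  have := Fact.mk hp
  refine normalizer_eq_top_iff.1 (index_eq_one.1 (Nat.eq_one_iff_not_exists_prime_dvd.2
    fun q hq hd => ?_))
  rcases eq_or_ne q p with rfl | hqp
  · exact S.not_dvd_index (hd.trans (index_dvd_of_le le_normalizer))
  · have hle := factorization_index_le_of_forall_mem hq (D := normalizer (S : Set G)) (H := ⊤)
      fun x _ hx => mem_normalizer_fintype fun s hs => h.conj_mem_sylow hp S hq hqp hx hs
    rw [index_top, Nat.factorization_one] at hle
    exact (hq.factorization_pos_of_dvd index_ne_zero_of_finite hd).not_ge hle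

end IsPairwiseExtremal

end Nilpotency

section Main

variable {G : Type*} [Group G] [Finite G] {α : ℕ → ℕ}

lemma isPairwiseExtremal_of_setOf_classSize_eq
    (hα : ∀ p : ℕ, p.Prime → (∃ x : G, p ∣ classSize x) →
      {a : ℕ | ∃ x : G, pIndex p x = a} ⊆ {1, p ^ α p})
    (hN : {k : ℕ | ∃ S : Finset ℕ,
        (∀ p ∈ S, p.Prime ∧ ∃ x : G, p ∣ classSize x) ∧ k = ∏ p ∈ S, p ^ α p} ⊆
      {k : ℕ | ∃ x : G, classSize x = k}) :
    IsPairwiseExtremal α G where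
  factorization_eq p hp x hx := by
    have hpos := hp.factorization_pos_of_dvd (classSize_ne_zero x) hx
    rcases hα p hp ⟨x, hx⟩ ⟨x, rfl⟩ with h | h
    · exact absurd ((Nat.pow_eq_one.1 h).resolve_left hp.ne_one) hpos.ne'
    · exact Nat.pow_right_injective hp.two_le h
  exists_eq_pow p hp hpG := by
    obtain ⟨x, hx⟩ := hN ⟨{p}, by simpa using ⟨hp, hpG⟩, rfl⟩
    exact ⟨x, by rwa [Finset.prod_singleton] at hx⟩
  exists_eq_mul p q hp hq hpq hpG hqG := by
    obtain ⟨x, hx⟩ := hN ⟨{p, q}, by simpa using ⟨⟨hp, hpG⟩, hq, hqG⟩, rfl⟩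
    exact ⟨x, by rwa [Finset.prod_pair hpq] at hx⟩

theorem casolo_tombari_nilpotent_general (h : IsPairwiseExtremal α G) : Group.IsNilpotent G :=
  ((Group.isNilpotent_of_finite_tfae (G := G)).out 0 3).2
    fun _ (hp : Fact _) P => h.sylow_normal hp.out P

end Main

/-- Casolo–Tombari: if for every prime `p` dividing some conjugacy class size of `G` one has
`N(G)_p = {1, p ^ α p}` with `α p ≥ 1`, and `N(G)` is exactly the set of all products
`∏ p ∈ S, p ^ α p` over finite sets `S` of such primes, then `G` is nilpotent. -/
theorem casolo_tombari_nilpotent {G : Type*} [Group G] [Finite G] (α : ℕ → ℕ)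
    (hα : ∀ p : ℕ, p.Prime → (∃ x : G, p ∣ classSize x) →
      1 ≤ α p ∧ {a : ℕ | ∃ x : G, pIndex p x = a} = {1, p ^ α p})
    (hN : {k : ℕ | ∃ x : G, classSize x = k} =
      {k : ℕ | ∃ S : Finset ℕ,
        (∀ p ∈ S, p.Prime ∧ ∃ x : G, p ∣ classSize x) ∧ k = ∏ p ∈ S, p ^ α p}) :
    Group.IsNilpotent G :=
  casolo_tombari_nilpotent_general <| isPairwiseExtremal_of_setOf_classSize_eq
    (fun p hp hpG => (hα p hp hpG).2.subset) hN.superset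
end

section
/- (Ito, 1970) Let G be a finite group whose set of conjugacy class sizes is N(G) = {1, m, n}, where m and n are coprime integers greater than 1. Then G is solvable. -/
/-!
Let `b` have the largest class size `n`, and suppose that `n` is coprime to all other class sizes.
If `|a^G|` is coprime to `n`, then every product of a conjugate of `a` and a conjugate of `b` is
conjugate to `ab`; since `|(ab)^G| ≤ n`, all left translates of `b^G` by conjugates of `a`
coincide. So the commutators of `a` lie in the left stabilizer `S` of `b^G`, a normal subgroup of
order dividing `n`, which therefore centralizes `a`. Hence the normal subgroup `K` generated by
the elements of class size other than `n` is nilpotent of class at most two.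

Outside `K` all elements have the same class size, so the centralizer of an element `x ∉ K` of
prime power order is nilpotent. Choose a noncentral `p`-element `a` of class size coprime to `n`;
by maximality of `n`, the elements of `C_G(a)` of order prime to `p` lie in `K`. If
`C_G(a) ≤ K`, then `G = C_G(x) C_G(a)` shows that `G ⧸ K` is an image of `C_G(x)`. Otherwise take
a `p`-element `x ∈ C_G(a)` outside `K`: now the elements of order prime to `p` of both `C_G(a)` and
`C_G(x)` lie in `K`, and as these subgroups have coprime indices, `G ⧸ K` is a `p`-group.
In both cases `G ⧸ K` is nilpotent.
-/

open Subgroup MulAction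

open scoped Pointwise commutatorElement

section Subgroups

variable {G : Type*} [Group G]

theorem mul_eq_univ_of_coprime_index {H K : Subgroup G} [H.FiniteIndex] [K.FiniteIndex]
    (h : H.index.Coprime K.index) : (H : Set G) * (K : Set G) = Set.univ := by
  have index_dvd : K.index ∣ K.relIndex H := by
    refine h.symm.dvd_of_dvd_mul_right ?_
    rw [← inf_relIndex_right, relIndex_mul_index inf_le_right]
    exact index_dvd_of_le inf_le_left
  have relIndex_ne_zero : K.relIndex H ≠ 0 :=
    mt index_eq_zero_of_relIndex_eq_zero FiniteIndex.index_ne_zero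
  have index_le : K.index ≤ (orbit H ((1 : G) : G ⧸ K)).ncard := by
    have stabilizer_eq : stabilizer H ((1 : G) : G ⧸ K) = K.subgroupOf H :=
      congrArg (subgroupOf · H) (stabilizer_quotient K)
    rw [← index_stabilizer, stabilizer_eq]
    exact Nat.le_of_dvd (Nat.pos_of_ne_zero relIndex_ne_zero) index_dvd
  have orbit_eq : orbit H ((1 : G) : G ⧸ K) = Set.univ :=
    Set.eq_of_subset_of_ncard_le (Set.subset_univ _) (by rwa [Set.ncard_univ])
  refine Set.eq_univ_of_forall fun g => ?_
  obtain ⟨u, hu⟩ : (g : G ⧸ K) ∈ orbit H ((1 : G) : G ⧸ K) := orbit_eq ▸ Set.mem_univ _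
  have hu' : ((u * 1 : G) : G ⧸ K) = g := hu
  rw [mul_one] at hu'
  exact Set.mem_mul.2 ⟨u, u.2, _, QuotientGroup.eq.1 hu', mul_inv_cancel_left _ _⟩

theorem relIndex_dvd_index_of_normal_right (A S : Subgroup G) [S.Normal] [S.FiniteIndex] :
    A.relIndex S ∣ A.index := by
  obtain ⟨t, ht⟩ := relIndex_dvd_index_of_normal S A
  have relIndex_ne_zero : S.relIndex A ≠ 0 :=
    mt index_eq_zero_of_relIndex_eq_zero FiniteIndex.index_ne_zero
  refine ⟨t, mul_left_cancel₀ relIndex_ne_zero ?_⟩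
  calc S.relIndex A * A.index = A.relIndex S * S.index := by
        rw [← inf_relIndex_right S A, ← inf_relIndex_right A S,
          relIndex_mul_index inf_le_right, relIndex_mul_index inf_le_right, inf_comm]
    _ = S.relIndex A * (A.relIndex S * t) := by rw [ht]; ring

theorem le_of_coprime_card_index {S A : Subgroup G} [S.Normal] [S.FiniteIndex]
    (h : (Nat.card S).Coprime A.index) : S ≤ A :=
  relIndex_eq_one.1 <| Nat.eq_one_of_dvd_coprimes h (relIndex_dvd_card A S)
    (relIndex_dvd_index_of_normal_right A S)

theorem card_stabilizer_dvd_ncard (s : Set G) : Nat.card (stabilizer G s) ∣ s.ncard := by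
  have free (y : s) : stabilizer (stabilizer G s) y = ⊥ := by
    refine (eq_bot_iff_forall _).2 fun t ht => Subtype.ext ?_
    exact mul_eq_right.1 (congrArg Subtype.val ht : (t : G) * y = y)
  rw [← Nat.card_coe_set_eq, Nat.card_congr (selfEquivOrbitsQuotientProd free), Nat.card_prod]
  exact dvd_mul_left _ _

theorem isNilpotent_of_forall_commutator_mem_center (h : ∀ x y : G, ⁅x, y⁆ ∈ center G) :
    Group.IsNilpotent G := by
  refine ⟨2, (eq_top_iff' _).2 fun x => Subgroup.mem_upperCentralSeries_succ_iff.2 fun y => ?_⟩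
  rw [Subgroup.upperCentralSeries_one]
  exact h x y

end Subgroups

section PrimaryElements

variable {G : Type*} [Group G]

theorem IsPElement.coprime_orderOf {p q : ℕ} (hp : p.Prime) (hq : q.Prime) (hpq : p ≠ q) {x y : G}
    (hx : IsPElement p x) (hy : IsPElement q y) : (orderOf x).Coprime (orderOf y) := by
  obtain ⟨k, hk⟩ := hx
  obtain ⟨l, hl⟩ := hy
  rw [hk, hl]
  exact Nat.Coprime.pow k l ((Nat.coprime_primes hp hq).2 hpq)

theorem isPElement_coe {p : ℕ} {H : Subgroup G} {x : H} :
    IsPElement p (x : G) ↔ IsPElement p x := by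
  simp only [IsPElement, orderOf_coe]

variable [Finite G]

theorem exists_isPElement_notMem_of_dvd_relIndex {q : ℕ} (hq : q.Prime) {K D : Subgroup G}
    (h : q ∣ K.relIndex D) : ∃ x ∈ D, x ∉ K ∧ IsPElement q x := by
  have : Fact q.Prime := ⟨hq⟩
  obtain ⟨Q⟩ : Nonempty (Sylow q D) := inferInstance
  have hQ : ¬ (Q : Subgroup D) ≤ K.subgroupOf D := fun hle =>
    Q.not_dvd_index (h.trans (index_dvd_of_le hle))
  obtain ⟨x, hxQ, hxK⟩ := SetLike.not_le_iff_exists.1 hQ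
  obtain ⟨k, hk⟩ := IsPGroup.iff_orderOf.1 Q.2 ⟨x, hxQ⟩
  exact ⟨x, x.2, hxK, k, by simpa using hk⟩

theorem exists_isPElement_notMem_of_not_le {K D : Subgroup G} (h : ¬ D ≤ K) :
    ∃ q : ℕ, q.Prime ∧ ∃ x ∈ D, x ∉ K ∧ IsPElement q x := by
  obtain ⟨q, hq, hdvd⟩ := Nat.exists_prime_and_dvd (mt relIndex_eq_one.1 h)
  exact ⟨q, hq, exists_isPElement_notMem_of_dvd_relIndex hq hdvd⟩

theorem not_dvd_index_of_forall_isPElement_mem {q : ℕ} (hq : q.Prime) {K D : Subgroup G}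
    (hD : ¬ q ∣ D.index) (hK : ∀ x ∈ D, IsPElement q x → x ∈ K) : ¬ q ∣ K.index := by
  intro hdvd
  have dvd_mul : q ∣ K.relIndex D * D.index := by
    rw [← inf_relIndex_right, relIndex_mul_index inf_le_right]
    exact hdvd.trans (index_dvd_of_le inf_le_left)
  obtain ⟨x, hxD, hxK, hx⟩ :=
    exists_isPElement_notMem_of_dvd_relIndex hq ((hq.dvd_mul.1 dvd_mul).resolve_right hD)
  exact hxK (hK x hxD hx)

theorem isPGroup_quotient_of_forall_prime_dvd_index {p : ℕ} {N : Subgroup G} [N.Normal]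
    (h : ∀ r : ℕ, r.Prime → r ∣ N.index → r = p) : IsPGroup p (G ⧸ N) :=
  IsPGroup.of_card (Nat.eq_prime_pow_of_unique_prime_dvd index_ne_zero_of_finite (h _))

theorem isNilpotent_of_forall_isPElement_mem_center {q : ℕ} (hq : q.Prime)
    (h : ∀ r : ℕ, r.Prime → r ≠ q → ∀ y : G, IsPElement r y → y ∈ center G) :
    Group.IsNilpotent G := by
  have : Fact q.Prime := ⟨hq⟩
  have hquot : IsPGroup q (G ⧸ center G) := by
    refine isPGroup_quotient_of_forall_prime_dvd_index fun r hr hdvd => ?_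
    by_contra hrq
    rw [← relIndex_top_right] at hdvd
    obtain ⟨y, -, hyc, hy⟩ := exists_isPElement_notMem_of_dvd_relIndex hr hdvd
    exact hyc (h r hr hrq y hy)
  exact Group.of_quotient_center_nilpotent hquot.isNilpotent

end PrimaryElements

section Centralizers

variable {G : Type*} [Group G]

theorem centralizer_le_of_mem_zpowers {x y : G} (h : x ∈ zpowers y) :
    centralizer {y} ≤ centralizer {x} := by
  rw [← centralizer_closure {y}, ← zpowers_eq_closure]
  exact centralizer_le (Set.singleton_subset_iff.2 h)

theorem mem_zpowers_mul_of_coprime {x y : G} (hc : Commute x y)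
    (ho : (orderOf x).Coprime (orderOf y)) : x ∈ zpowers (x * y) := by
  have hpow : (x * y) ^ orderOf y = x ^ orderOf y := by
    rw [hc.mul_pow, pow_orderOf_eq_one, mul_one]
  have hx : x ∈ zpowers (x ^ orderOf y) := mem_zpowers_pow_iff.2 ho.symm
  rw [← hpow] at hx
  exact zpowers_le.2 (npow_mem_zpowers _ _) hx

theorem centralizer_mul_le_of_coprime {x y : G} (hc : Commute x y)
    (ho : (orderOf x).Coprime (orderOf y)) : centralizer {x * y} ≤ centralizer {x} :=
  centralizer_le_of_mem_zpowers (mem_zpowers_mul_of_coprime hc ho)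

theorem classSize_dvd_classSize_mul_of_coprime {x y : G} (hc : Commute x y)
    (ho : (orderOf x).Coprime (orderOf y)) : classSize x ∣ classSize (x * y) :=
  index_dvd_of_le (centralizer_mul_le_of_coprime hc ho)

theorem classSize_eq_one_iff_s17 {x : G} : classSize x = 1 ↔ x ∈ center G := by
  rw [classSize, index_eq_one, centralizer_eq_top_iff_subset, Set.singleton_subset_iff,
    SetLike.mem_coe]

theorem ncard_conjugatesOf (x : G) : (conjugatesOf x).ncard = classSize x := by
  have horbit : orbit (ConjAct G) x = conjugatesOf x := ConjAct.orbit_eq_carrier_conjClasses x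
  rw [← horbit, ← index_stabilizer, ConjAct.stabilizer_eq_centralizer]
  rfl

theorem exists_isPElement_classSize_dvd [Finite G] {a : G} (ha : a ∉ center G) :
    ∃ p : ℕ, p.Prime ∧ ∃ x ∉ center G, IsPElement p x ∧ classSize x ∣ classSize a := by
  obtain ⟨p, hp, x, hxa, hxc, hx⟩ :=
    exists_isPElement_notMem_of_not_le (mt zpowers_le.1 ha)
  exact ⟨p, hp, x, hxc, hx, index_dvd_of_le (centralizer_le_of_mem_zpowers hxa)⟩

end Centralizers

section ClassStabilizer

variable {G : Type*} [Group G]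

/-- The left stabilizer of the conjugacy class of `b`: the subgroup of all `s` such that
`s • b^G = b^G`, where `G` acts on its subsets by left translation. -/
def classStabilizer (b : G) : Subgroup G :=
  stabilizer G (conjugatesOf b)

theorem conj_mem_conjugatesOf_iff {b y : G} (g : G) :
    g * y * g⁻¹ ∈ conjugatesOf b ↔ y ∈ conjugatesOf b := by
  have hconj : IsConj y (g * y * g⁻¹) := isConj_iff.2 ⟨g, rfl⟩
  exact ⟨fun h => IsConj.trans h hconj.symm, fun h => IsConj.trans h hconj⟩

instance classStabilizer_normal (b : G) : (classStabilizer b).Normal where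
  conj_mem s hs g := by
    refine mem_stabilizer_set.2 fun y => ?_
    have hy : g * s * g⁻¹ * y = g * (s * (g⁻¹ * y * g⁻¹⁻¹)) * g⁻¹ := by group
    rw [smul_eq_mul, hy, conj_mem_conjugatesOf_iff, ← smul_eq_mul, mem_stabilizer_set.1 hs,
      conj_mem_conjugatesOf_iff]

theorem card_classStabilizer_dvd (b : G) : Nat.card (classStabilizer b) ∣ classSize b :=
  ncard_conjugatesOf b ▸ card_stabilizer_dvd_ncard (conjugatesOf b)

variable [Finite G] {a b : G}

theorem conjugatesOf_mul_subset (h : (classSize a).Coprime (classSize b)) :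
    conjugatesOf a * conjugatesOf b ⊆ conjugatesOf (a * b) := by
  rintro _ ⟨_, ha, _, hb, rfl⟩
  obtain ⟨g, rfl⟩ := isConj_iff.1 ha
  obtain ⟨k, rfl⟩ := isConj_iff.1 hb
  obtain ⟨u, hu, v, hv, huv : u * v = k⁻¹ * g⟩ :
      k⁻¹ * g ∈ (centralizer {b} : Set G) * (centralizer {a} : Set G) :=
    mul_eq_univ_of_coprime_index h.symm ▸ Set.mem_univ _
  have hub : u * b * u⁻¹ = b := mul_inv_eq_iff_eq_mul.2 (mem_centralizer_singleton_iff.1 hu)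
  have hva : v * a * v⁻¹ = a := mul_inv_eq_iff_eq_mul.2 (mem_centralizer_singleton_iff.1 hv)
  obtain rfl : g = k * u * v := by rw [mul_assoc, huv, mul_inv_cancel_left]
  refine isConj_iff.2 ⟨k * u, ?_⟩
  calc k * u * (a * b) * (k * u)⁻¹ = k * u * a * u⁻¹ * (u * b * u⁻¹) * k⁻¹ := by group
    _ = k * u * (v * a * v⁻¹) * u⁻¹ * b * k⁻¹ := by rw [hub, hva]
    _ = k * u * v * a * (k * u * v)⁻¹ * (k * b * k⁻¹) := by group

theorem smul_conjugatesOf_eq (hco : (classSize a).Coprime (classSize b))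
    (hle : classSize (a * b) ≤ classSize b) {c : G} (hc : IsConj a c) :
    c • conjugatesOf b = conjugatesOf (a * b) := by
  have smul_subset : c • conjugatesOf b ⊆ conjugatesOf a * conjugatesOf b :=
    Set.smul_set_subset_mul (show c ∈ conjugatesOf a from hc)
  refine Set.eq_of_subset_of_ncard_le (smul_subset.trans (conjugatesOf_mul_subset hco)) ?_
  rwa [Set.ncard_smul_set, ncard_conjugatesOf, ncard_conjugatesOf]

theorem commutator_mem_classStabilizer (hco : (classSize a).Coprime (classSize b))
    (hle : classSize (a * b) ≤ classSize b) (g : G) : ⁅a, g⁆ ∈ classStabilizer b := by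
  have hmem : (g * a * g⁻¹)⁻¹ * a ∈ classStabilizer b := by
    refine mem_stabilizer_iff.2 ?_
    rw [mul_smul, inv_smul_eq_iff, smul_conjugatesOf_eq hco hle (IsConj.refl a),
      smul_conjugatesOf_eq hco hle (isConj_iff.2 ⟨g, rfl⟩)]
  have hcomm : ⁅a, g⁆ = a * (g * a * g⁻¹)⁻¹ := by rw [commutatorElement_def]; group
  rw [hcomm]
  exact (classStabilizer_normal b).mem_comm hmem

theorem classStabilizer_le_centralizer (hco : (classSize a).Coprime (classSize b)) :
    classStabilizer b ≤ centralizer {a} :=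
  le_of_coprime_card_index (hco.symm.coprime_dvd_left (card_classStabilizer_dvd b))

end ClassStabilizer

section ClassSizeNeClosure

/-- The normal subgroup of `G` generated by the elements whose class size is not `n`: the smallest
normal subgroup outside which all elements have class size `n`. -/
def classSizeNeClosure (G : Type*) [Group G] (n : ℕ) : Subgroup G :=
  normalClosure {x | classSize x ≠ n}

variable {G : Type*} [Group G]

variable {n : ℕ}

instance classSizeNeClosure_normal : (classSizeNeClosure G n).Normal :=
  normalClosure_normal

theorem classSize_eq_of_notMem {x : G} (hx : x ∉ classSizeNeClosure G n) :
    classSize x = n :=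
  not_not.1 fun h => hx (subset_normalClosure h)

theorem mem_classSizeNeClosure_of_commute {a z : G} (hco : (classSize a).Coprime n)
    (hdvd : ∀ x : G, ¬ classSize a * n ∣ classSize x) (hc : Commute a z)
    (ho : (orderOf a).Coprime (orderOf z)) : z ∈ classSizeNeClosure G n := by
  by_contra hz
  refine hdvd (a * z) (hco.mul_dvd_of_dvd_of_dvd ?_ ?_)
  · exact classSize_dvd_classSize_mul_of_coprime hc ho
  · rw [← classSize_eq_of_notMem hz, hc.eq]
    exact classSize_dvd_classSize_mul_of_coprime hc.symm ho.symm

variable [Finite G]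

theorem isNilpotent_classSizeNeClosure {b : G} (hmax : ∀ x : G, classSize x ≤ classSize b)
    (hco : ∀ x : G, classSize x ≠ classSize b → (classSize x).Coprime (classSize b)) :
    Group.IsNilpotent (classSizeNeClosure G (classSize b)) := by
  have le_centralizer :
      classSizeNeClosure G (classSize b) ≤ centralizer (classStabilizer b : Set G) :=
    normalClosure_le_normal fun a ha => mem_centralizer_iff.2 fun s hs =>
      mem_centralizer_singleton_iff.1 (classStabilizer_le_centralizer (hco a ha) hs)
  have le_step :
      classSizeNeClosure G (classSize b) ≤ (classStabilizer b).upperCentralSeriesStep := by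
    rw [Subgroup.upperCentralSeriesStep_eq_comap_center]
    refine normalClosure_le_normal fun a ha => ?_
    rw [← Subgroup.upperCentralSeriesStep_eq_comap_center]
    exact commutator_mem_classStabilizer (hco a ha) (hmax _)
  refine isNilpotent_of_forall_commutator_mem_center fun x y => mem_center_iff.2 fun z => ?_
  exact Subtype.ext (mem_centralizer_iff.1 (le_centralizer z.2) _ (le_step x.2 y)).symm

theorem centralizer_le_of_notMem {x y : G} (hx : x ∉ classSizeNeClosure G n) (hc : Commute x y)
    (ho : (orderOf x).Coprime (orderOf y)) : centralizer {x} ≤ centralizer {y} := by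
  have hxy : x * y ∉ classSizeNeClosure G n := fun h =>
    hx (zpowers_le.2 h (mem_zpowers_mul_of_coprime hc ho))
  have hindex : (centralizer {x * y}).index = (centralizer {x}).index :=
    (classSize_eq_of_notMem hxy).trans (classSize_eq_of_notMem hx).symm
  have heq : centralizer {x * y} = centralizer {x} :=
    (centralizer_mul_le_of_coprime hc ho).eq_of_not_lt fun hlt =>
      (index_strictAnti hlt).ne hindex.symm
  rw [← heq, hc.eq]
  exact centralizer_mul_le_of_coprime hc.symm ho.symm

theorem isNilpotent_centralizer_of_notMem {q : ℕ} (hq : q.Prime) {x : G} (hx : IsPElement q x)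
    (hxK : x ∉ classSizeNeClosure G n) : Group.IsNilpotent (centralizer {x}) := by
  refine isNilpotent_of_forall_isPElement_mem_center hq fun r hr hrq y hy => ?_
  have hle : centralizer {x} ≤ centralizer {(y : G)} :=
    centralizer_le_of_notMem hxK (mem_centralizer_singleton_iff.1 y.2).symm
      (hx.coprime_orderOf hq hr hrq.symm (isPElement_coe.2 hy))
  exact mem_center_iff.2 fun z => Subtype.ext (mem_centralizer_singleton_iff.1 (hle z.2))

theorem isNilpotent_quotient_of_centralizer_le {a : G} (hco : (classSize a).Coprime n)
    (hle : centralizer {a} ≤ classSizeNeClosure G n) :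
    Group.IsNilpotent (G ⧸ classSizeNeClosure G n) := by
  by_cases htop : ⊤ ≤ classSizeNeClosure G n
  · have := QuotientGroup.subsingleton_iff.2 (top_le_iff.1 htop)
    infer_instance
  obtain ⟨q, hq, x, -, hxK, hx⟩ := exists_isPElement_notMem_of_not_le htop
  have := isNilpotent_centralizer_of_notMem hq hx hxK
  refine Group.nilpotent_of_surjective
    ((QuotientGroup.mk' (classSizeNeClosure G n)).comp (centralizer {x}).subtype) fun c => ?_
  obtain ⟨g, rfl⟩ := QuotientGroup.mk_surjective c
  have hcop : (classSize x).Coprime (classSize a) := by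
    rw [classSize_eq_of_notMem hxK]
    exact hco.symm
  obtain ⟨u, hu, v, hv, rfl⟩ : g ∈ (centralizer {x} : Set G) * (centralizer {a} : Set G) :=
    mul_eq_univ_of_coprime_index hcop ▸ Set.mem_univ g
  exact ⟨⟨u, hu⟩, QuotientGroup.eq.2 (by simpa using hle hv)⟩

theorem isPGroup_quotient_of_commute {p : ℕ} (hp : p.Prime) {a x : G} (ha : IsPElement p a)
    (hx : IsPElement p x) (hxK : x ∉ classSizeNeClosure G n) (hxa : Commute x a)
    (hco : (classSize a).Coprime n) (hdvd : ∀ y : G, ¬ classSize a * n ∣ classSize y) :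
    IsPGroup p (G ⧸ classSizeNeClosure G n) := by
  refine isPGroup_quotient_of_forall_prime_dvd_index fun q hq hqK => ?_
  by_contra hqp
  have mem_of_commute_a (z : G) (hz : IsPElement q z) (haz : Commute a z) :
      z ∈ classSizeNeClosure G n :=
    mem_classSizeNeClosure_of_commute hco hdvd haz (ha.coprime_orderOf hp hq (Ne.symm hqp) hz)
  have mem_of_commute_x (z : G) (hz : IsPElement q z) (hxz : Commute x z) :
      z ∈ classSizeNeClosure G n :=
    mem_of_commute_a z hz <| mem_centralizer_singleton_iff.1 <|
      centralizer_le_of_notMem hxK hxz (hx.coprime_orderOf hp hq (Ne.symm hqp) hz)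
        (mem_centralizer_singleton_iff.2 hxa.symm)
  have dvd_classSize {c : G} (h : ∀ z : G, IsPElement q z → Commute c z →
      z ∈ classSizeNeClosure G n) : q ∣ classSize c := by
    by_contra hqc
    exact not_dvd_index_of_forall_isPElement_mem hq hqc
      (fun z hzc hz => h z hz (mem_centralizer_singleton_iff.1 hzc).symm) hqK
  exact Nat.not_coprime_of_dvd_of_dvd hq.one_lt (dvd_classSize mem_of_commute_a)
    (classSize_eq_of_notMem hxK ▸ dvd_classSize mem_of_commute_x) hco

theorem isNilpotent_quotient_classSizeNeClosure {p : ℕ} (hp : p.Prime) {a : G}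
    (ha : IsPElement p a) (hco : (classSize a).Coprime n)
    (hdvd : ∀ y : G, ¬ classSize a * n ∣ classSize y) :
    Group.IsNilpotent (G ⧸ classSizeNeClosure G n) := by
  by_cases hle : centralizer {a} ≤ classSizeNeClosure G n
  · exact isNilpotent_quotient_of_centralizer_le hco hle
  obtain ⟨q, hq, x, hxa, hxK, hx⟩ := exists_isPElement_notMem_of_not_le hle
  have hcomm : Commute x a := mem_centralizer_singleton_iff.1 hxa
  obtain rfl : p = q := by
    by_contra hpq
    exact hxK (mem_classSizeNeClosure_of_commute hco hdvd hcomm.symm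
      (ha.coprime_orderOf hp hq hpq hx))
  have : Fact p.Prime := ⟨hp⟩
  exact (isPGroup_quotient_of_commute hp ha hx hxK hcomm hco hdvd).isNilpotent

end ClassSizeNeClosure

theorem ito_three_class_sizes_solvable_general {G : Type*} [Group G] [Finite G] {n : ℕ}
    (hmax : IsGreatest (Set.range (classSize : G → ℕ)) n)
    (hco : ∀ k ∈ Set.range (classSize : G → ℕ), k ≠ n → k.Coprime n)
    (hne : ∃ k ∈ Set.range (classSize : G → ℕ), k ≠ 1 ∧ k ≠ n) :
    Group.IsSolvable G := by
  obtain ⟨⟨b, rfl⟩, hle⟩ := hmax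
  obtain ⟨_, ⟨a, rfl⟩, ha, hab⟩ := hne
  simp only [mem_upperBounds, Set.forall_mem_range] at hle hco
  obtain ⟨p, hp, x, hxc, hx, hxa⟩ := exists_isPElement_classSize_dvd (mt classSize_eq_one_iff_s17.2 ha)
  have not_dvd (y : G) : ¬ classSize x * classSize b ∣ classSize y := fun hdvd => by
    have classSize_pos (z : G) : 0 < classSize z := Nat.pos_of_ne_zero index_ne_zero_of_finite
    have one_lt : 1 < classSize x :=
      lt_of_le_of_ne' (classSize_pos x) (mt classSize_eq_one_iff_s17.1 hxc)
    have := Nat.le_of_dvd (classSize_pos y) hdvd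
    nlinarith [hle y, classSize_pos b]
  have := isNilpotent_classSizeNeClosure hle hco
  have := isNilpotent_quotient_classSizeNeClosure hp hx ((hco a hab).coprime_dvd_left hxa) not_dvd
  exact (Group.isSolvable_iff_subgroup_quotient (classSizeNeClosure G (classSize b))).2
    ⟨inferInstance, inferInstance⟩

/-- Ito (1970): if `N(G) = {1, m, n}` with `m, n` coprime and greater than `1`, then `G`
is solvable. -/
theorem ito_three_class_sizes_solvable {G : Type*} [Group G] [Finite G] (m n : ℕ)
    (hm : 1 < m) (hn : 1 < n) (hmn : Nat.Coprime m n)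
    (hN : {k : ℕ | ∃ x : G, classSize x = k} = {1, m, n}) :
    IsSolvable G := by
  have hne : m ≠ n := by
    rintro rfl
    exact hm.ne' ((Nat.coprime_self m).1 hmn)
  wlog hlt : m < n generalizing m n
  · exact this n m hn hm hmn.symm (by rw [hN, Set.pair_comm]) hne.symm (by omega)
  have hrange : Set.range (classSize : G → ℕ) = {1, m, n} := hN
  apply ito_three_class_sizes_solvable_general (n := n) <;> rw [hrange]
  · exact ⟨by simp, by rintro k (rfl | rfl | rfl) <;> omega⟩
  · rintro k (rfl | rfl | rfl) hk
    exacts [Nat.coprime_one_left n, hmn, absurd rfl hk]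
  · exact ⟨m, by simp, hm.ne', hne⟩
end
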